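/- Let k be an infinite perfect field and let I, J ⊆ k[x_0,...,x_n] be homogeneous ideals with I unmixed radical of projective dimension d ≥ 0 and J Cohen–Macaulay of projective dimension e ≥ d. Then there exist homogeneous polynomials f_1,...,f_{e−d} ∈ I with deg f_j ≤ ((d+j)! · deg I)^{1/j} for each j, whose images in k[x_0,...,x_n]/J form a regular sequence. -/

import Mathlib

open MvPolynomial

set_option synthInstance.maxHeartbeats 1000000
set_option maxHeartbeats 1000000

/-- Integer-valued binomial coefficient `C(a, b)`, zero when `a < 0` or `a < b`. -/
def ichoose (a : ℤ) (b : ℕ) : ℤ := if a < 0 then 0 else (a.toNat).choose b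

/-- The Hilbert function of a (homogeneous) ideal `I ⊆ k[x₀, …, xₙ]`:
`m ↦ dim_k (k[x₀, …, xₙ]/I)_m`. -/
noncomputable def hilbF (k : Type*) [Field k] {n : ℕ}
    (I : Ideal (MvPolynomial (Fin (n+1)) k)) (m : ℕ) : ℕ :=
  Module.finrank k ((homogeneousSubmodule (Fin (n+1)) k m).map
    (Ideal.Quotient.mkₐ k I).toLinearMap)

open scoped Classical in
/-- The Hilbert polynomial of `I` (the polynomial agreeing with the Hilbert
function for all large `m`; junk value `0` if none exists). -/
noncomputable def hilbP (k : Type*) [Field k] {n : ℕ}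
    (I : Ideal (MvPolynomial (Fin (n+1)) k)) : Polynomial ℚ :=
  if h : ∃ P : Polynomial ℚ, ∀ᶠ m : ℕ in Filter.atTop,
      (hilbF k I m : ℚ) = P.eval (m : ℚ) then h.choose else 0

/-- The (algebraic) degree of a homogeneous ideal `I` of projective dimension
`d ≥ 0`: `d! · (leading coefficient of its Hilbert polynomial)`. -/
noncomputable def idealDeg (k : Type*) [Field k] {n : ℕ}
    (I : Ideal (MvPolynomial (Fin (n+1)) k)) : ℕ :=
  ⌊((hilbP k I).natDegree.factorial : ℚ) * (hilbP k I).leadingCoeff⌋₊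

/-- The projective dimension of a homogeneous ideal `I` (of dimension `≥ 0`):
the degree of its Hilbert polynomial. -/
noncomputable def idealDim (k : Type*) [Field k] {n : ℕ}
    (I : Ideal (MvPolynomial (Fin (n+1)) k)) : ℕ :=
  (hilbP k I).natDegree

/-- A homogeneous ideal: one containing all homogeneous components of its elements. -/
def IsHomogeneousIdeal {k : Type*} [Field k] {n : ℕ}
    (I : Ideal (MvPolynomial (Fin (n+1)) k)) : Prop :=
  ∀ f ∈ I, ∀ m : ℕ, homogeneousComponent m f ∈ I

/-- `I` is unmixed of projective dimension `d`: every associated prime `P` of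
`k[x₀,…,xₙ]/I` satisfies `dim k[x₀,…,xₙ]/P = d + 1` (affine Krull dimension). -/
def IsUnmixed (k : Type*) [Field k] {n : ℕ}
    (I : Ideal (MvPolynomial (Fin (n+1)) k)) (d : ℕ) : Prop :=
  ∀ P ∈ associatedPrimes (MvPolynomial (Fin (n+1)) k)
      (MvPolynomial (Fin (n+1)) k ⧸ I),
    ringKrullDim (MvPolynomial (Fin (n+1)) k ⧸ P) = ((d + 1 : ℕ) : WithBot (WithTop ℕ))

/-- `J` is a (graded) Cohen--Macaulay homogeneous ideal of projective dimension `e`: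
there is a homogeneous system of parameters of length `e + 1` for `k[x₀,…,xₙ]/J`
which is a (weakly) regular sequence on it. -/
def IsCohenMacaulayOfDim (k : Type*) [Field k] {n : ℕ}
    (J : Ideal (MvPolynomial (Fin (n+1)) k)) (e : ℕ) : Prop :=
  J ≠ ⊤ ∧ ∃ g : Fin (e + 1) → MvPolynomial (Fin (n+1)) k,
    (∀ i, ∃ m : ℕ, 1 ≤ m ∧ (g i).IsHomogeneous m) ∧
    RingTheory.Sequence.IsWeaklyRegular (MvPolynomial (Fin (n+1)) k ⧸ J)
      (List.ofFn fun i => Ideal.Quotient.mk J (g i)) ∧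
    Ideal.span (Set.range (X : Fin (n+1) → MvPolynomial (Fin (n+1)) k)) ≤
      (J ⊔ Ideal.span (Set.range g)).radical


section PartA
open RingTheory.Sequence

/-- `f` is a nonzerodivisor modulo `J`. -/
def NZ {R : Type*} [CommRing R] (J : Ideal R) (f : R) : Prop := ∀ x, f * x ∈ J → x ∈ J

/-- Weakly regular sequences modulo an ideal, recursively. -/
def Reg {R : Type*} [CommRing R] : Ideal R → List R → Prop
  | _, [] => True
  | J, a :: l => NZ J a ∧ Reg (J ⊔ Ideal.span {a}) l

theorem reg_iff {R : Type*} [CommRing R] (J : Ideal R) (l : List R) :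
    Reg J l ↔ ∀ i (h : i < l.length), NZ (J ⊔ Ideal.ofList (l.take i)) l[i] := by
  induction l generalizing J with
  | nil => simp [Reg]
  | cons a l ih =>
    rw [Reg, ih]
    constructor
    · rintro ⟨h0, h1⟩ i hi
      rcases i with _ | i
      · simpa using h0
      · have := h1 i (by simpa using hi)
        simpa [Ideal.ofList_cons, sup_assoc] using this
    · intro h
      refine ⟨?_, fun i hi => ?_⟩
      · have := h 0 (by simp)
        simp only [List.take_zero, Ideal.ofList_nil, sup_bot_eq] at this
        exact this
      have := h (i+1) (by simpa using hi)
      simpa [Ideal.ofList_cons, sup_assoc] using this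

theorem isWeaklyRegular_quot_iff {R : Type*} [CommRing R] (J : Ideal R) (l : List R) :
    IsWeaklyRegular (R ⧸ J) (l.map (Ideal.Quotient.mk J)) ↔ Reg J l := by
  rw [reg_iff, isWeaklyRegular_iff]
  have key : ∀ (K : Ideal R) (f : R),
      IsSMulRegular ((R ⧸ J) ⧸ ((K.map (Ideal.Quotient.mk J)) • ⊤ : Submodule (R ⧸ J) (R ⧸ J)))
        (Ideal.Quotient.mk J f) ↔ NZ (J ⊔ K) f := by
    intro K f
    have hm : ∀ x : R, Ideal.Quotient.mk J x ∈ ((K.map (Ideal.Quotient.mk J)) • ⊤ : Submodule (R ⧸ J) (R ⧸ J))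
        ↔ x ∈ J ⊔ K := by
      intro x
      rw [smul_eq_mul, Ideal.mul_top, ← Ideal.mem_comap,
        Ideal.comap_map_of_surjective _ Ideal.Quotient.mk_surjective, ← RingHom.ker_eq_comap_bot,
        Ideal.mk_ker, sup_comm]
    rw [isSMulRegular_iff_right_eq_zero_of_smul]
    constructor
    · intro h x hx
      rw [← hm] at hx ⊢
      have := h (Submodule.Quotient.mk (Ideal.Quotient.mk J x)) (by
        rw [← Submodule.Quotient.mk_smul, Submodule.Quotient.mk_eq_zero]
        simpa using hx)
      rwa [Submodule.Quotient.mk_eq_zero] at this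
    · intro h y hy
      obtain ⟨y, rfl⟩ := Submodule.Quotient.mk_surjective _ y
      obtain ⟨x, rfl⟩ := Ideal.Quotient.mk_surjective y
      rw [← Submodule.Quotient.mk_smul, Submodule.Quotient.mk_eq_zero] at hy
      rw [Submodule.Quotient.mk_eq_zero, hm]
      apply h
      rw [← hm]
      simpa using hy
  constructor
  · intro h i hi
    have := h i (by simpa using hi)
    rw [← List.map_take, ← Ideal.map_ofList, List.getElem_map] at this
    exact (key _ _).1 this
  · intro h i hi
    rw [← List.map_take, ← Ideal.map_ofList, List.getElem_map]
    exact (key _ _).2 (h i (by simpa using hi))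

variable {k : Type*} [Field k] {n : ℕ}

theorem hom_comp_mul {σ : Type*} {p q : MvPolynomial σ k} {δ : ℕ} (hq : q.IsHomogeneous δ) (N : ℕ) :
    homogeneousComponent (N + δ) (p * q) = homogeneousComponent N p * q := by
  classical
  have h1 : p * q = ∑ i ∈ Finset.range (p.totalDegree + 1), homogeneousComponent i p * q := by
    rw [← Finset.sum_mul, sum_homogeneousComponent]
  rw [h1, map_sum]
  have : ∀ i, homogeneousComponent (N + δ) (homogeneousComponent i p * q) =
      if N = i then homogeneousComponent i p * q else 0 := by
    intro i
    rw [homogeneousComponent_of_mem (n := i + δ) ((homogeneousComponent_isHomogeneous i p).mul hq)]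
    simp
  simp only [this, Finset.sum_ite_eq, Finset.mem_range]
  split_ifs with h
  · rfl
  · rw [homogeneousComponent_eq_zero _ _ (by omega), zero_mul]

theorem hom_comp_mul_lt {σ : Type*} {p q : MvPolynomial σ k} {δ : ℕ} (hq : q.IsHomogeneous δ) {N : ℕ}
    (hN : N < δ) : homogeneousComponent N (p * q) = 0 := by
  classical
  have h1 : p * q = ∑ i ∈ Finset.range (p.totalDegree + 1), homogeneousComponent i p * q := by
    rw [← Finset.sum_mul, sum_homogeneousComponent]
  rw [h1, map_sum]
  refine Finset.sum_eq_zero fun i _ => ?_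
  rw [homogeneousComponent_of_mem (n := i + δ) ((homogeneousComponent_isHomogeneous i p).mul hq),
    if_neg (by omega)]

theorem mem_of_comps {I : Ideal (MvPolynomial (Fin (n+1)) k)} {f : MvPolynomial (Fin (n+1)) k}
    (h : ∀ m, homogeneousComponent m f ∈ I) : f ∈ I := by
  rw [← sum_homogeneousComponent f]
  exact Ideal.sum_mem _ fun i _ => h i

theorem IsHomogeneousIdeal.sup_span {J : Ideal (MvPolynomial (Fin (n+1)) k)}
    (hJ : IsHomogeneousIdeal J) {f : MvPolynomial (Fin (n+1)) k} {δ : ℕ} (hf : f.IsHomogeneous δ) :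
    IsHomogeneousIdeal (J ⊔ Ideal.span {f}) := by
  intro x hx m
  obtain ⟨j, hj, y, hy, rfl⟩ := Submodule.mem_sup.1 hx
  obtain ⟨z, rfl⟩ := Ideal.mem_span_singleton'.1 hy
  rw [map_add]
  refine Ideal.add_mem _ (Ideal.mem_sup_left (hJ j hj m)) (Ideal.mem_sup_right ?_)
  rcases lt_or_ge m δ with h | h
  · rw [hom_comp_mul_lt hf h]; exact zero_mem _
  · obtain ⟨N, rfl⟩ := Nat.exists_eq_add_of_le' h
    rw [hom_comp_mul hf]
    exact Ideal.mul_mem_left _ _ (Ideal.mem_span_singleton_self f)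

theorem mem_sup_span {R : Type*} [CommRing R] {J : Ideal R} {f x : R} :
    x ∈ J ⊔ Ideal.span {f} ↔ ∃ y, x - f * y ∈ J := by
  constructor
  · intro hx
    obtain ⟨j, hj, y, hy, rfl⟩ := Submodule.mem_sup.1 hx
    obtain ⟨z, rfl⟩ := Ideal.mem_span_singleton'.1 hy
    exact ⟨z, by simpa [mul_comm] using hj⟩
  · rintro ⟨y, hy⟩
    have : x = (x - f * y) + y * f := by ring
    rw [this]
    exact Ideal.add_mem _ (Ideal.mem_sup_left hy)
      (Ideal.mem_sup_right (Ideal.mul_mem_left _ _ (Ideal.mem_span_singleton_self f)))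

/-- graded separatedness -/
theorem separated {J : Ideal (MvPolynomial (Fin (n+1)) k)}
    (hJ : IsHomogeneousIdeal J) {f : MvPolynomial (Fin (n+1)) k} {δ : ℕ} (hδ : 1 ≤ δ)
    (hf : f.IsHomogeneous δ) {x : MvPolynomial (Fin (n+1)) k}
    (hx : ∀ t : ℕ, ∃ y, x - f ^ t * y ∈ J) : x ∈ J := by
  apply mem_of_comps
  intro m
  obtain ⟨y, hy⟩ := hx (m + 1)
  have := hJ _ hy m
  rw [map_sub, mul_comm, hom_comp_mul_lt (hf.pow (m+1)) (by nlinarith), sub_zero] at this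
  exact this

/-- extract powers of `f` -/
theorem extract {J : Ideal (MvPolynomial (Fin (n+1)) k)}
    (hJ : IsHomogeneousIdeal J) {f : MvPolynomial (Fin (n+1)) k} {δ : ℕ} (hδ : 1 ≤ δ)
    (hf : f.IsHomogeneous δ) {x : MvPolynomial (Fin (n+1)) k} (hx : x ∉ J) :
    ∃ (t : ℕ) (y : MvPolynomial (Fin (n+1)) k), x - f ^ t * y ∈ J ∧ y ∉ J ⊔ Ideal.span {f} := by
  by_contra hcon
  push Not at hcon
  apply hx
  apply separated hJ hδ hf
  intro t
  induction t with
  | zero => exact ⟨x, by simp⟩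
  | succ t ih =>
    obtain ⟨y, hy⟩ := ih
    obtain ⟨z, hz⟩ := mem_sup_span.1 (hcon t y hy)
    refine ⟨z, ?_⟩
    have : x - f ^ (t+1) * z = (x - f^t * y) + f^t * (y - f * z) := by ring
    rw [this]
    exact Ideal.add_mem _ hy (Ideal.mul_mem_left _ _ hz)

theorem NZ.pow {R : Type*} [CommRing R] {J : Ideal R} {f : R} (h : NZ J f) (t : ℕ) : NZ J (f ^ t) := by
  induction t with
  | zero => intro x hx; simpa using hx
  | succ t ih => intro x hx; exact h _ (ih _ (by rw [← mul_assoc, ← pow_succ]; exact hx))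

theorem NZ.swap_right {R : Type*} [CommRing R] {J : Ideal R} {f c : R} (hf : NZ J f)
    (hc : NZ (J ⊔ Ideal.span {f}) c) : NZ (J ⊔ Ideal.span {c}) f := by
  intro x hx
  obtain ⟨y, hy⟩ := mem_sup_span.1 hx
  have h1 : c * y ∈ J ⊔ Ideal.span {f} := mem_sup_span.2 ⟨x, by
    have : c * y - f * x = -(f * x - c * y) := by ring
    rw [this]; exact neg_mem hy⟩
  obtain ⟨z, hz⟩ := mem_sup_span.1 (hc _ h1)
  refine mem_sup_span.2 ⟨z, hf _ ?_⟩
  have : f * (x - c * z) = (f * x - c * y) + c * (y - f * z) := by ring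
  rw [this]
  exact Ideal.add_mem _ hy (Ideal.mul_mem_left _ _ hz)

theorem NZ.swap_left {J : Ideal (MvPolynomial (Fin (n+1)) k)}
    (hJ : IsHomogeneousIdeal J) {f c : MvPolynomial (Fin (n+1)) k} {δ : ℕ} (hδ : 1 ≤ δ)
    (hfh : f.IsHomogeneous δ) (hf : NZ J f) (hc : NZ (J ⊔ Ideal.span {f}) c) : NZ J c := by
  intro x hx
  by_contra hxJ
  obtain ⟨t, y, h1, h2⟩ := extract hJ hδ hfh hxJ
  apply h2
  apply hc
  apply Ideal.mem_sup_left
  apply hf.pow t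
  have : f ^ t * (c * y) = c * x - c * (x - f ^ t * y) := by ring
  rw [this]
  exact Ideal.sub_mem _ hx (Ideal.mul_mem_left _ _ h1)

theorem Reg.perm {l l' : List (MvPolynomial (Fin (n+1)) k)} (h : l.Perm l') :
    ∀ {J : Ideal (MvPolynomial (Fin (n+1)) k)}, IsHomogeneousIdeal J →
    (∀ f ∈ l, ∃ δ, 1 ≤ δ ∧ f.IsHomogeneous δ) → Reg J l → Reg J l' := by
  induction h with
  | nil => intros; trivial
  | cons x _ ih =>
    intro J hJ hl hr
    obtain ⟨δ, hδ, hx⟩ := hl x (by simp)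
    exact ⟨hr.1, ih (hJ.sup_span hx) (fun f hf => hl f (by simp [hf])) hr.2⟩
  | swap x y l =>
    intro J hJ hl hr
    obtain ⟨δ, hδ, hx⟩ := hl y (by simp)
    obtain ⟨h1, h2, h3⟩ := hr
    refine ⟨h1.swap_left hJ hδ hx h2, h1.swap_right h2, ?_⟩
    rwa [sup_assoc, sup_comm (Ideal.span {x}), ← sup_assoc]
  | trans h1 _ ih1 ih2 =>
    intro J hJ hl hr
    exact ih2 hJ (fun f hf => hl f (h1.mem_iff.2 hf)) (ih1 hJ hl hr)

/-- graded depth at least `r` -/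
def Dep : ℕ → Ideal (MvPolynomial (Fin (n+1)) k) → Prop
  | 0, _ => True
  | r + 1, J => ∃ g, (∃ δ, 1 ≤ δ ∧ g.IsHomogeneous δ) ∧ NZ J g ∧ Dep r (J ⊔ Ideal.span {g})

theorem Reg.dep {l : List (MvPolynomial (Fin (n+1)) k)} :
    ∀ {J : Ideal (MvPolynomial (Fin (n+1)) k)},
    (∀ f ∈ l, ∃ δ, 1 ≤ δ ∧ f.IsHomogeneous δ) → Reg J l → Dep l.length J := by
  induction l with
  | nil => intros; trivial
  | cons a l ih =>
    intro J hl hr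
    exact ⟨a, hl a (by simp), hr.1, ih (fun f hf => hl f (by simp [hf])) hr.2⟩

theorem mem_assoc_iff {R : Type*} [CommRing R] [IsNoetherianRing R] {J P : Ideal R} :
    P ∈ associatedPrimes R (R ⧸ J) ↔ P.IsPrime ∧ ∃ x, ∀ a, a ∈ P ↔ a * x ∈ J := by
  rw [AssociatedPrimes.mem_iff, isAssociatedPrime_iff]
  refine and_congr_right fun _ => ?_
  constructor
  · rintro ⟨x, rfl⟩
    obtain ⟨x, rfl⟩ := Ideal.Quotient.mk_surjective x
    refine ⟨x, fun a => ?_⟩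
    rw [Submodule.mem_colon_singleton, Submodule.mem_bot, ← Ideal.Quotient.eq_zero_iff_mem, map_mul]
    rfl
  · rintro ⟨x, hx⟩
    refine ⟨Ideal.Quotient.mk J x, ?_⟩
    ext a
    rw [Submodule.mem_colon_singleton, Submodule.mem_bot, hx, ← Ideal.Quotient.eq_zero_iff_mem, map_mul]
    rfl

theorem exists_assoc {R : Type*} [CommRing R] [IsNoetherianRing R] {J : Ideal R} {x : R} (hx : x ∉ J) :
    ∃ P ∈ associatedPrimes R (R ⧸ J), ∀ a, a * x ∈ J → a ∈ P := by
  obtain ⟨P, hP, hle⟩ := exists_le_isAssociatedPrime_of_isNoetherianRing R (Ideal.Quotient.mk J x)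
    (by rwa [Ne, Ideal.Quotient.eq_zero_iff_mem])
  refine ⟨P, hP, fun a ha => hle ?_⟩
  rw [Submodule.mem_colon_singleton, Submodule.mem_bot]
  rwa [← Ideal.Quotient.eq_zero_iff_mem, map_mul] at ha

theorem nz_of_notMem {R : Type*} [CommRing R] [IsNoetherianRing R] {J : Ideal R} {f : R}
    (h : ∀ P ∈ associatedPrimes R (R ⧸ J), f ∉ P) : NZ J f := by
  intro x hx
  by_contra hxJ
  obtain ⟨P, hP, h1⟩ := exists_assoc hxJ
  exact h P hP (h1 _ hx)

/-- avoidance: a subspace not contained in any member of a finite set of ideals. -/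
theorem avoid [Infinite k] {σ : Type*} (V : Submodule k (MvPolynomial σ k))
    (T : Set (Ideal (MvPolynomial σ k))) (hT : T.Finite)
    (h : ∀ P ∈ T, ∃ v ∈ V, v ∉ P) : ∃ v ∈ V, ∀ P ∈ T, v ∉ P := by
  by_contra hcon
  push Not at hcon
  have := hT.to_subtype
  obtain ⟨P, hP⟩ := Subspace.exists_eq_top_of_iUnion_eq_univ (k := k) (E := V)
    (p := fun P : T => ((P : Ideal (MvPolynomial σ k)).restrictScalars k).comap V.subtype) (by
      rw [Set.eq_univ_iff_forall]
      rintro ⟨v, hv⟩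
      obtain ⟨P, hP, hvP⟩ := hcon v hv
      exact Set.mem_iUnion.2 ⟨⟨P, hP⟩, hvP⟩)
  obtain ⟨v, hv, hvP⟩ := h P P.2
  exact hvP ((hP ▸ Submodule.mem_top : (⟨v, hv⟩ : V) ∈ _))

/-- no associated prime contains all variables when there is a positive degree nonzerodivisor -/
theorem mem_of_X_mem {P : Ideal (MvPolynomial (Fin (n+1)) k)} (hP : ∀ i, X i ∈ P)
    {g : MvPolynomial (Fin (n+1)) k} {δ : ℕ} (hδ : 1 ≤ δ) (hg : g.IsHomogeneous δ) : g ∈ P := by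
  rw [g.as_sum]
  refine Ideal.sum_mem _ fun γ hγ => ?_
  have hdeg := hg (mem_support_iff.1 hγ)
  have : ∃ i, γ i ≠ 0 := by
    by_contra hcon
    push Not at hcon
    have : γ = 0 := by ext i; simp [hcon i]
    subst this
    simp at hdeg
    omega
  obtain ⟨i, hi⟩ := this
  rw [monomial_eq, Finsupp.prod_fintype _ _ (by simp)]
  refine Ideal.mul_mem_left _ _ (Ideal.mem_of_dvd _ (Finset.dvd_prod_of_mem _ (Finset.mem_univ i)) ?_)
  exact Ideal.pow_mem_of_mem _ (hP i) _ (Nat.pos_of_ne_zero hi)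

/-- positive depth passes between quotients by nonzerodivisors (socle exchange) -/
theorem socle_exchange {J : Ideal (MvPolynomial (Fin (n+1)) k)} {f g : MvPolynomial (Fin (n+1)) k}
    (hf : NZ J f) (hg : NZ J g) {δ : ℕ} (hδ : 1 ≤ δ) (hgh : g.IsHomogeneous δ)
    (hdep : Dep 1 (J ⊔ Ideal.span {g})) :
    ∀ P ∈ associatedPrimes (MvPolynomial (Fin (n+1)) k)
      (MvPolynomial (Fin (n+1)) k ⧸ (J ⊔ Ideal.span {f})), ∃ i, X i ∉ P := by
  intro P hP
  by_contra hcon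
  push Not at hcon
  obtain ⟨hPp, x, hx⟩ := mem_assoc_iff.1 hP
  have hxJ : x ∉ J ⊔ Ideal.span {f} := fun h =>
    hPp.ne_top ((Ideal.eq_top_iff_one _).2 ((hx 1).2 (by simpa using h)))
  obtain ⟨y, hy⟩ := mem_sup_span.1 ((hx g).1 (mem_of_X_mem hcon hδ hgh))
  obtain ⟨h, ⟨δ', hδ', hhh⟩, hnz, -⟩ := hdep
  have hyJ : y ∉ J ⊔ Ideal.span {g} := by
    intro hyJ
    obtain ⟨z, hz⟩ := mem_sup_span.1 hyJ
    apply hxJ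
    refine mem_sup_span.2 ⟨z, hg _ ?_⟩
    have : g * (x - f * z) = (g * x - f * y) + f * (y - g * z) := by ring
    rw [this]
    exact Ideal.add_mem _ hy (Ideal.mul_mem_left _ _ hz)
  apply hyJ
  apply hnz
  obtain ⟨w, hw⟩ := mem_sup_span.1 ((hx h).1 (mem_of_X_mem hcon hδ' hhh))
  refine mem_sup_span.2 ⟨w, hf _ ?_⟩
  have : f * (h * y - g * w) = g * (h * x - f * w) - h * (g * x - f * y) := by ring
  rw [this]
  exact Ideal.sub_mem _ (Ideal.mul_mem_left _ _ hw) (Ideal.mul_mem_left _ _ hy)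

theorem assoc_not_irrelevant {J : Ideal (MvPolynomial (Fin (n+1)) k)} (hdep : Dep 1 J) :
    ∀ P ∈ associatedPrimes (MvPolynomial (Fin (n+1)) k)
      (MvPolynomial (Fin (n+1)) k ⧸ J), ∃ i, X i ∉ P := by
  intro P hP
  by_contra hcon
  push Not at hcon
  obtain ⟨hPp, x, hx⟩ := mem_assoc_iff.1 hP
  obtain ⟨h, ⟨δ', hδ', hhh⟩, hnz, -⟩ := hdep
  refine hPp.ne_top ((Ideal.eq_top_iff_one _).2 ((hx 1).2 ?_))
  rw [one_mul]
  exact hnz _ ((hx h).1 (mem_of_X_mem hcon hδ' hhh))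

theorem Dep.one {r : ℕ} {J : Ideal (MvPolynomial (Fin (n+1)) k)} (h : Dep (r+1) J) : Dep 1 J := by
  obtain ⟨g, h1, h2, -⟩ := h
  exact ⟨g, h1, h2, trivial⟩

theorem Dep.quot [Infinite k] (r : ℕ) : ∀ {J : Ideal (MvPolynomial (Fin (n+1)) k)}
    {f : MvPolynomial (Fin (n+1)) k},
    Dep (r+1) J → NZ J f → (∃ δ, 1 ≤ δ ∧ f.IsHomogeneous δ) → Dep r (J ⊔ Ideal.span {f}) := by
  induction r with
  | zero => intros; trivial
  | succ r ih =>
    intro J f hJ hf hfh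
    obtain ⟨g, ⟨δ, hδ, hgh⟩, hg, hdep⟩ := hJ
    obtain ⟨c, hcV, hc⟩ := avoid (k := k) (homogeneousSubmodule (Fin (n+1)) k 1)
      (associatedPrimes (MvPolynomial (Fin (n+1)) k)
        (MvPolynomial (Fin (n+1)) k ⧸ (J ⊔ Ideal.span {f})) ∪
       (associatedPrimes (MvPolynomial (Fin (n+1)) k)
        (MvPolynomial (Fin (n+1)) k ⧸ (J ⊔ Ideal.span {g})) ∪
       associatedPrimes (MvPolynomial (Fin (n+1)) k)
        (MvPolynomial (Fin (n+1)) k ⧸ J)))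
      ((associatedPrimes.finite _ _).union
        ((associatedPrimes.finite _ _).union (associatedPrimes.finite _ _))) (by
        intro P hP
        have : ∃ i, X i ∉ P := by
          rcases hP with hP | hP | hP
          · exact socle_exchange hf hg hδ hgh hdep.one P hP
          · exact assoc_not_irrelevant hdep.one P hP
          · exact assoc_not_irrelevant (⟨g, ⟨δ, hδ, hgh⟩, hg, trivial⟩ : Dep 1 J) P hP
        obtain ⟨i, hi⟩ := this
        exact ⟨X i, isHomogeneous_X _ _, hi⟩)
    have hch : ∃ δ, 1 ≤ δ ∧ c.IsHomogeneous δ := ⟨1, le_rfl, hcV⟩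
    have hcf : NZ (J ⊔ Ideal.span {f}) c := nz_of_notMem fun P hP => hc P (Or.inl hP)
    have hcg : NZ (J ⊔ Ideal.span {g}) c := nz_of_notMem fun P hP => hc P (Or.inr (Or.inl hP))
    have hcJ : NZ J c := nz_of_notMem fun P hP => hc P (Or.inr (Or.inr hP))
    have h1 := ih hdep hcg hch
    have h2 : Dep (r+1) (J ⊔ Ideal.span {c}) := by
      refine ⟨g, ⟨δ, hδ, hgh⟩, hg.swap_right hcg, ?_⟩
      rwa [sup_assoc, sup_comm (Ideal.span {c}), ← sup_assoc]
    have h3 := ih h2 (hf.swap_right hcf) hfh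
    refine ⟨c, hch, hcf, ?_⟩
    rwa [sup_assoc, sup_comm (Ideal.span {f}), ← sup_assoc]

theorem krull_lt_of_lt {R : Type*} [CommRing R] {P Q : Ideal R} (hP : P.IsPrime) (hPQ : P ≤ Q)
    {g : R} (hgQ : g ∈ Q) (hgP : g ∉ P) : ringKrullDim (R ⧸ Q) + 1 ≤ ringKrullDim (R ⧸ P) := by
  refine ringKrullDim_succ_le_of_surjective (Ideal.Quotient.factor hPQ)
    (Ideal.Quotient.factor_surjective hPQ) (r := Ideal.Quotient.mk P g) ?_ ?_
  · rw [mem_nonZeroDivisors_iff_ne_zero, Ne, Ideal.Quotient.eq_zero_iff_mem]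
    exact hgP
  · simpa [Ideal.Quotient.eq_zero_iff_mem] using hgQ

theorem Dep.dim (r : ℕ) : ∀ {J : Ideal (MvPolynomial (Fin (n+1)) k)}, IsHomogeneousIdeal J →
    Dep r J → ∀ P ∈ associatedPrimes (MvPolynomial (Fin (n+1)) k)
      (MvPolynomial (Fin (n+1)) k ⧸ J),
      ((r : ℕ) : WithBot ℕ∞) ≤ ringKrullDim (MvPolynomial (Fin (n+1)) k ⧸ P) := by
  induction r with
  | zero =>
    intro J hJ _ P hP
    have := (mem_assoc_iff.1 hP).1
    have : Nontrivial (MvPolynomial (Fin (n+1)) k ⧸ P) := Ideal.Quotient.nontrivial_iff.2 this.ne_top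
    simpa using ringKrullDim_nonneg_of_nontrivial (R := MvPolynomial (Fin (n+1)) k ⧸ P)
  | succ r ih =>
    intro J hJ hdep P hP
    obtain ⟨g, ⟨δ, hδ, hgh⟩, hg, hdep⟩ := hdep
    obtain ⟨hPp, x, hx⟩ := mem_assoc_iff.1 hP
    have hxJ : x ∉ J := fun h =>
      hPp.ne_top ((Ideal.eq_top_iff_one _).2 ((hx 1).2 (by simpa using h)))
    obtain ⟨t, y, h1, h2⟩ := extract hJ hδ hgh hxJ
    obtain ⟨Q, hQ, hQ2⟩ := exists_assoc h2
    have hPQ : P ≤ Q := by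
      intro a ha
      apply hQ2
      apply Ideal.mem_sup_left
      apply hg.pow t
      have : g ^ t * (a * y) = a * x - a * (x - g ^ t * y) := by ring
      rw [this]
      exact Ideal.sub_mem _ ((hx a).1 ha) (Ideal.mul_mem_left _ _ h1)
    have hgQ : g ∈ Q := hQ2 _ (mem_sup_span.2 ⟨y, by simp⟩)
    have hgP : g ∉ P := fun h => hxJ (hg _ ((hx g).1 h))
    refine le_trans ?_ (krull_lt_of_lt hPp hPQ hgQ hgP)
    push_cast
    gcongr
    exact ih (hJ.sup_span hgh) hdep Q hQ

end PartA

section PartB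

theorem dim_le_of_integral {R T : Type*} [CommRing R] [CommRing T] (f : R →+* T) (hf : f.IsIntegral) :
    ringKrullDim T ≤ ringKrullDim R := by
  algebraize [f]
  refine Order.krullDim_le_of_strictMono (PrimeSpectrum.comap f) ?_
  intro p q hpq
  have : p.asIdeal < q.asIdeal := hpq
  have h2 := Ideal.IsIntegral.comap_lt_comap (R := R) this
  exact h2

variable {k : Type*} [Field k] {n : ℕ}

open Cardinal in
theorem exists_indep_vars (P : Ideal (MvPolynomial (Fin (n+1)) k)) (hP : P.IsPrime) (r : ℕ)
    (hr : ((r : ℕ) : WithBot ℕ∞) ≤ ringKrullDim (MvPolynomial (Fin (n+1)) k ⧸ P)) :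
    ∃ i : Fin r → Fin (n+1), AlgebraicIndependent k (fun j => Ideal.Quotient.mkₐ k P (X (i j))) := by
  obtain ⟨s, g, hg, hgf⟩ := exists_finite_inj_algHom_of_fg k (MvPolynomial (Fin (n+1)) k ⧸ P)
  have h1 := dim_le_of_integral g.toRingHom hgf.to_isIntegral
  rw [MvPolynomial.ringKrullDim_of_isNoetherianRing] at h1
  have hrs : r ≤ s := by
    have := hr.trans h1
    simp at this
    exact_mod_cast this
  have halg : AlgebraicIndependent k (fun j => g (X j)) := by
    rw [algebraicIndependent_iff_injective_aeval]
    have : aeval (fun j => g (X j)) = g := by ext; simp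
    rw [this]; exact hg
  have hs := halg.lift_cardinalMk_le_trdeg
  set A := MvPolynomial (Fin (n+1)) k ⧸ P
  set x : Fin (n+1) → A := fun j => Ideal.Quotient.mkₐ k P (X j) with hx
  have hadj : Algebra.adjoin k (Set.range x) = ⊤ := by
    have : Set.range x = (Ideal.Quotient.mkₐ k P) '' (Set.range X) := by
      rw [← Set.range_comp]; rfl
    rw [this, Algebra.adjoin_image, MvPolynomial.adjoin_range_X, Algebra.map_top, AlgHom.range_eq_top]
    exact Ideal.Quotient.mkₐ_surjective k P
  have : Algebra.IsAlgebraic (Algebra.adjoin k (Set.range x)) A := by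
    constructor
    intro a
    exact isAlgebraic_algebraMap (⟨a, by rw [hadj]; trivial⟩ : Algebra.adjoin k (Set.range x))
  obtain ⟨t, ht, hb⟩ := exists_isTranscendenceBasis_subset (R := k) (Set.range x)
  have hc := hb.cardinalMk_eq_trdeg
  have hle : (s : Cardinal) ≤ #t := by
    rw [hc]; simpa using hs
  have htf : t.Finite := (Set.finite_range x).subset ht
  have := htf.fintype
  have hcard : r ≤ Fintype.card t := by
    rw [Cardinal.mk_fintype] at hle
    exact hrs.trans (by exact_mod_cast hle)
  obtain ⟨e⟩ : Nonempty (Fin r ↪ t) := by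
    rw [Function.Embedding.nonempty_iff_card_le]; simpa using hcard
  choose i hi using fun j : Fin r => ht (e j).2
  refine ⟨i, ?_⟩
  have := hb.1.comp e e.injective
  convert this using 1
  funext j
  exact hi j

theorem finite_homog {σ : Type*} [Finite σ] (m : ℕ) :
    Module.Finite k (homogeneousSubmodule σ k m) :=
  Module.Finite.iff_fg.2 (homogeneousSubmodule_fg σ k m)

theorem finrank_homog (r m : ℕ) :
    Module.finrank k (homogeneousSubmodule (Fin (r+1)) k m) = (m + r).choose r := by
  classical
  rw [homogeneousSubmodule_eq_finsupp_supported]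
  have he : {d : Fin (r+1) →₀ ℕ | d.degree = m} = (Finset.finsuppAntidiag Finset.univ m : Finset (Fin (r+1) →₀ ℕ)) := by
    ext d
    simp [Finset.mem_finsuppAntidiag, Finsupp.degree_eq_sum]
  rw [he, (AddMonoidAlgebra.supportedEquivFinsupp _).finrank_eq]
  simp
  rw [Finset.card_finsuppAntidiag_nat_eq_choose]
  simp
  rw [Nat.choose_symm_add.symm]
  congr 1; omega

/-- Lower bound for the Hilbert function. -/
theorem hilbF_ge {r : ℕ} {ι : Type*} [Fintype ι] (I : Ideal (MvPolynomial (Fin (n+1)) k))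
    (z : Fin (r+1) → MvPolynomial (Fin (n+1)) k) (hz : ∀ i, (z i).IsHomogeneous 1)
    (b : ι → MvPolynomial (Fin (n+1)) k) (δ : ι → ℕ) (hb : ∀ i, (b i).IsHomogeneous (δ i))
    (hind : ∀ β : ι → MvPolynomial (Fin (r+1)) k, ∑ i, aeval z (β i) * b i ∈ I → ∀ i, β i = 0)
    (m : ℕ) (hm : ∀ i, δ i ≤ m) :
    ∑ i, ((m - δ i) + r).choose r ≤ hilbF k I m := by
  unfold hilbF
  have := fun m => finite_homog (k := k) (σ := Fin (r+1)) m
  have := finite_homog (k := k) (σ := Fin (n+1)) m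
  let L : (∀ i, homogeneousSubmodule (Fin (r+1)) k (m - δ i)) →ₗ[k] MvPolynomial (Fin (n+1)) k :=
    ∑ i, (LinearMap.mulRight k (b i)) ∘ₗ (aeval z).toLinearMap ∘ₗ
      (homogeneousSubmodule (Fin (r+1)) k (m - δ i)).subtype ∘ₗ LinearMap.proj i
  have hL : ∀ β, L β = ∑ i, aeval z (β i : MvPolynomial (Fin (r+1)) k) * b i := by
    intro β; simp [L]
  have hLm : ∀ β, L β ∈ homogeneousSubmodule (Fin (n+1)) k m := by
    intro β
    rw [hL]
    refine Submodule.sum_mem _ fun i _ => ?_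
    have h1 : (aeval z (β i : MvPolynomial (Fin (r+1)) k)).IsHomogeneous (1 * (m - δ i)) :=
      IsHomogeneous.aeval (β i).2 z hz
    have h2 := h1.mul (hb i)
    rw [one_mul, Nat.sub_add_cancel (hm i)] at h2
    exact h2
  let L' : (∀ i, homogeneousSubmodule (Fin (r+1)) k (m - δ i)) →ₗ[k]
    ((homogeneousSubmodule (Fin (n+1)) k m).map (Ideal.Quotient.mkₐ k I).toLinearMap) :=
    ((Ideal.Quotient.mkₐ k I).toLinearMap ∘ₗ L).codRestrict _
      fun β => Submodule.mem_map_of_mem (hLm β)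
  have hinj : Function.Injective L' := by
    rw [← LinearMap.ker_eq_bot, LinearMap.ker_eq_bot']
    intro β hβ
    have h1 : Ideal.Quotient.mk I (L β) = 0 := congrArg Subtype.val hβ
    rw [Ideal.Quotient.eq_zero_iff_mem, hL] at h1
    have h2 := hind _ h1
    funext i
    exact Subtype.ext (h2 i)
  have h := LinearMap.finrank_le_finrank_of_injective hinj
  rw [Module.finrank_pi_fintype] at h
  simpa only [finrank_homog] using h

theorem hilbF_prime_ge (P : Ideal (MvPolynomial (Fin (n+1)) k)) (hP : P.IsPrime) (r : ℕ)
    (hr : ((r + 1 : ℕ) : WithBot ℕ∞) ≤ ringKrullDim (MvPolynomial (Fin (n+1)) k ⧸ P)) (m : ℕ) :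
    (m + r).choose r ≤ hilbF k P m := by
  obtain ⟨i, hi⟩ := exists_indep_vars P hP (r+1) hr
  have := hilbF_ge (ι := Unit) P (fun j => X (i j)) (fun j => isHomogeneous_X _ _) (fun _ => 1)
    (fun _ => 0) (fun _ => isHomogeneous_one _ _) (by
      intro β hβ u
      simp only [Finset.univ_unique, Finset.sum_singleton, mul_one] at hβ
      rw [algebraicIndependent_iff_injective_aeval] at hi
      apply hi
      rw [map_zero, ← Ideal.Quotient.eq_zero_iff_mem.2 hβ]
      have : aeval (fun j => Ideal.Quotient.mkₐ k P (X (i j))) =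
        (Ideal.Quotient.mkₐ k P).comp (aeval (fun j => X (i j))) := by ext; simp
      rw [this]; rfl) m (by simp)
  simpa using this

/-- comparison of Hilbert functions produces elements -/
theorem exists_mem_notMem_of_hilbF_lt (I P : Ideal (MvPolynomial (Fin (n+1)) k)) (m : ℕ)
    (h : hilbF k I m < hilbF k P m) :
    ∃ v ∈ (homogeneousSubmodule (Fin (n+1)) k m ⊓ I.restrictScalars k), v ∉ P := by
  by_contra hcon
  push Not at hcon
  have := finite_homog (k := k) (σ := Fin (n+1)) m
  refine absurd h (not_lt.2 ?_)
  unfold hilbF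
  have key : ∀ K : Ideal (MvPolynomial (Fin (n+1)) k),
      Module.finrank k ((homogeneousSubmodule (Fin (n+1)) k m).map (Ideal.Quotient.mkₐ k K).toLinearMap)
      + Module.finrank k (LinearMap.ker ((Ideal.Quotient.mkₐ k K).toLinearMap ∘ₗ (homogeneousSubmodule (Fin (n+1)) k m).subtype))
      = Module.finrank k (homogeneousSubmodule (Fin (n+1)) k m) := by
    intro K
    rw [← LinearMap.finrank_range_add_finrank_ker ((Ideal.Quotient.mkₐ k K).toLinearMap ∘ₗ (homogeneousSubmodule (Fin (n+1)) k m).subtype), LinearMap.range_comp, Submodule.range_subtype]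
  have hle : LinearMap.ker ((Ideal.Quotient.mkₐ k I).toLinearMap ∘ₗ (homogeneousSubmodule (Fin (n+1)) k m).subtype)
    ≤ LinearMap.ker ((Ideal.Quotient.mkₐ k P).toLinearMap ∘ₗ (homogeneousSubmodule (Fin (n+1)) k m).subtype) := by
    intro v hv
    have h1 : Ideal.Quotient.mk I (v : MvPolynomial (Fin (n+1)) k) = 0 := hv
    have h2 := hcon v ⟨v.2, Ideal.Quotient.eq_zero_iff_mem.1 h1⟩
    exact Ideal.Quotient.eq_zero_iff_mem.2 h2
  have h3 := Submodule.finrank_mono hle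
  have h4 := key I
  have h5 := key P
  omega

end PartB

section PartC

variable {k : Type*} [Field k] {n : ℕ}

theorem hom_eval_smul {σ : Type*} {p : MvPolynomial σ k} {N : ℕ} (hp : p.IsHomogeneous N)
    (c : k) (a : σ → k) : eval (fun i => c * a i) p = c ^ N * eval a p := by
  rw [eval_eq, eval_eq, Finset.mul_sum]
  refine Finset.sum_congr rfl fun d hd => ?_
  have h1 : d.degree = N := by
    by_contra h
    exact (mem_support_iff.1 hd) (hp.coeff_eq_zero h)
  simp only [mul_pow, Finset.prod_mul_distrib, Finset.prod_pow_eq_pow_sum]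
  have h2 : ∑ i ∈ d.support, d i = N := h1
  rw [h2]; ring

theorem exists_point [Infinite k] {r N : ℕ} {p : MvPolynomial (Fin (r+1)) k} (hp : p.IsHomogeneous N)
    (h0 : p ≠ 0) : ∃ b : Fin r → k, eval (Fin.cons 1 b : Fin (r+1) → k) p ≠ 0 := by
  have h1 : X 0 * p ≠ 0 := mul_ne_zero (X_ne_zero _) h0
  obtain ⟨a, ha⟩ : ∃ a, eval a (X 0 * p) ≠ 0 := by
    by_contra hcon
    push Not at hcon
    exact h1 (MvPolynomial.funext fun x => by rw [hcon x, map_zero])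
  rw [map_mul, eval_X] at ha
  have ha0 := left_ne_zero_of_mul ha
  have ha1 := right_ne_zero_of_mul ha
  refine ⟨fun i => (a 0)⁻¹ * a i.succ, ?_⟩
  have : (Fin.cons 1 (fun i => (a 0)⁻¹ * a i.succ) : Fin (r+1) → k) = fun i => (a 0)⁻¹ * a i := by
    funext i
    refine Fin.cases ?_ (fun i => ?_) i
    · simp [ha0]
    · simp
  rw [this, hom_eval_smul hp]
  exact mul_ne_zero (pow_ne_zero _ (inv_ne_zero ha0)) ha1

theorem coeff_prod_pow {R ι : Type*} [CommRing R] (w : ι → Polynomial R)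
    (hw : ∀ i, (w i).natDegree ≤ 1) (s : Finset ι) (d : ι → ℕ) :
    (∏ i ∈ s, w i ^ d i).natDegree ≤ ∑ i ∈ s, d i ∧
    (∏ i ∈ s, w i ^ d i).coeff (∑ i ∈ s, d i) = ∏ i ∈ s, (w i).coeff 1 ^ d i := by
  classical
  induction s using Finset.induction_on with
  | empty => simp
  | insert i s hi ih =>
    rw [Finset.prod_insert hi, Finset.sum_insert hi, Finset.prod_insert hi]
    have h1 : (w i ^ d i).natDegree ≤ d i := by
      refine Polynomial.natDegree_pow_le.trans ?_
      have := Nat.mul_le_mul_left (d i) (hw i)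
      simpa using this
    have h2 : (w i ^ d i).coeff (d i) = (w i).coeff 1 ^ d i := by
      have := Polynomial.coeff_pow_of_natDegree_le (m := d i) (hw i)
      simpa using this
    refine ⟨Polynomial.natDegree_mul_le.trans (add_le_add h1 ih.1), ?_⟩
    rw [Polynomial.coeff_mul_add_eq_of_natDegree_le h1 ih.1, h2, ih.2]

theorem coeff_aeval {R σ : Type*} [CommRing R] [Algebra k R] (w : σ → Polynomial R)
    (hw : ∀ i, (w i).natDegree ≤ 1) {p : MvPolynomial σ k} {N : ℕ} (hp : p.IsHomogeneous N) :
    (aeval w p).natDegree ≤ N ∧ (aeval w p).coeff N = aeval (fun i => (w i).coeff 1) p := by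
  have hd : ∀ d ∈ p.support, ∑ i ∈ d.support, d i = N := by
    intro d hd
    by_contra h
    exact (mem_support_iff.1 hd) (hp.coeff_eq_zero h)
  rw [aeval_def, eval₂_eq, aeval_def, eval₂_eq]
  constructor
  · refine Polynomial.natDegree_sum_le_of_forall_le _ _ fun d hd' => ?_
    rw [← hd d hd', IsScalarTower.algebraMap_apply k R (Polynomial R), Polynomial.algebraMap_eq]
    exact (Polynomial.natDegree_C_mul_le _ _).trans (coeff_prod_pow w hw _ _).1
  · rw [Polynomial.finsetSum_coeff]
    refine Finset.sum_congr rfl fun d hd' => ?_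
    rw [← hd d hd', IsScalarTower.algebraMap_apply k R (Polynomial R), Polynomial.algebraMap_eq,
      Polynomial.coeff_C_mul, (coeff_prod_pow w hw _ _).2]

/-- the structure map of a linear projection -/
noncomputable def phi (I : Ideal (MvPolynomial (Fin (n+1)) k)) {r : ℕ}
    (z : Fin r → MvPolynomial (Fin (n+1)) k) :
    MvPolynomial (Fin r) k →ₐ[k] (MvPolynomial (Fin (n+1)) k ⧸ I) :=
  (Ideal.Quotient.mkₐ k I).comp (aeval z)

theorem phi_eq (I : Ideal (MvPolynomial (Fin (n+1)) k)) {r : ℕ}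
    (z : Fin r → MvPolynomial (Fin (n+1)) k) (p : MvPolynomial (Fin r) k) :
    phi I z p = Ideal.Quotient.mk I (aeval z p) := rfl

theorem normal_step [Infinite k] (I : Ideal (MvPolynomial (Fin (n+1)) k)) {r N : ℕ}
    (z : Fin (r+1) → MvPolynomial (Fin (n+1)) k) (hz : ∀ i, (z i).IsHomogeneous 1)
    (hinteg : (phi I z).toRingHom.IsIntegral)
    (p : MvPolynomial (Fin (r+1)) k) (hp : p.IsHomogeneous N) (hp0 : p ≠ 0) (hpI : aeval z p ∈ I) :
    ∃ z' : Fin r → MvPolynomial (Fin (n+1)) k, (∀ i, (z' i).IsHomogeneous 1) ∧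
      (phi I z').toRingHom.IsIntegral := by
  obtain ⟨b, hb⟩ := exists_point hp hp0
  set u := eval (Fin.cons 1 b : Fin (r+1) → k) p with hu
  let z' : Fin r → MvPolynomial (Fin (n+1)) k := fun i => z i.succ - C (b i) * z 0
  refine ⟨z', fun i => (hz _).sub ((hz 0).C_mul _), ?_⟩
  let w : Fin (r+1) → Polynomial (MvPolynomial (Fin r) k) :=
    Fin.cons Polynomial.X (fun i => Polynomial.C (X i) + Polynomial.C (C (b i)) * Polynomial.X)
  have hw : ∀ i, (w i).natDegree ≤ 1 := by
    intro i
    refine Fin.cases ?_ (fun i => ?_) i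
    · simp only [w, Fin.cons_zero]; exact Polynomial.natDegree_X_le
    · simp only [w, Fin.cons_succ]; compute_degree
  have hw1 : (fun i => (w i).coeff 1) = fun i => (C ((Fin.cons 1 b : Fin (r+1) → k) i) : MvPolynomial (Fin r) k) := by
    funext i
    refine Fin.cases ?_ (fun i => ?_) i
    · simp [w]
    · simp [w, Polynomial.coeff_C]
  obtain ⟨hQ1, hQ2⟩ := coeff_aeval (k := k) w hw hp
  have hQ3 : aeval (fun i => (w i).coeff 1) p = (C u : MvPolynomial (Fin r) k) := by
    rw [hw1, hu]
    have : (aeval (fun i => (C ((Fin.cons 1 b : Fin (r+1) → k) i) : MvPolynomial (Fin r) k)) : MvPolynomial (Fin (r+1)) k →ₐ[k] _)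
       = (Algebra.ofId k (MvPolynomial (Fin r) k)).comp (aeval (Fin.cons 1 b : Fin (r+1) → k)) := by
      apply MvPolynomial.algHom_ext
      intro i
      simp [Algebra.ofId_apply, MvPolynomial.algebraMap_eq]
    rw [this]
    simp [Algebra.ofId_apply, MvPolynomial.algebraMap_eq]
  set Q := aeval w p with hQ
  let A := MvPolynomial (Fin (n+1)) k ⧸ I
  let _ : Algebra (MvPolynomial (Fin r) k) A := (phi I z').toRingHom.toAlgebra
  have halg : ∀ q, algebraMap (MvPolynomial (Fin r) k) A q = phi I z' q := fun q => rfl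
  have : IsScalarTower k (MvPolynomial (Fin r) k) A := by
    refine IsScalarTower.of_algebraMap_eq fun c => ?_
    rw [halg]
    exact ((phi I z').commutes c).symm
  have hev : Polynomial.aeval (Ideal.Quotient.mk I (z 0) : A) Q = 0 := by
    have h1 : ((Polynomial.aeval (Ideal.Quotient.mk I (z 0) : A) : Polynomial (MvPolynomial (Fin r) k) →ₐ[MvPolynomial (Fin r) k] A).restrictScalars k).comp (aeval w)
      = phi I z := by
      apply MvPolynomial.algHom_ext
      intro i
      refine Fin.cases ?_ (fun i => ?_) i
      · simp [w, phi]
      · simp [w, phi, halg, z']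
        have hC : algebraMap k (MvPolynomial (Fin (n+1)) k ⧸ I) (b i) = Ideal.Quotient.mk I (C (b i)) := rfl
        rw [hC]; ring
    have h2 := DFunLike.congr_fun h1 p
    rw [phi_eq, Ideal.Quotient.eq_zero_iff_mem.2 hpI] at h2
    exact h2
  have hz0 : IsIntegral (MvPolynomial (Fin r) k) (Ideal.Quotient.mk I (z 0) : A) := by
    refine ⟨Polynomial.C (C u⁻¹) * Q, ?_, ?_⟩
    · refine Polynomial.monic_of_natDegree_le_of_coeff_eq_one N
        ((Polynomial.natDegree_C_mul_le _ _).trans hQ1) ?_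
      rw [Polynomial.coeff_C_mul, hQ2, hQ3, ← C_mul, inv_mul_cancel₀ hb, C_1]
    · rw [← Polynomial.aeval_def, map_mul, hev, mul_zero]
  have hmem : ∀ q, phi I z q ∈ integralClosure (MvPolynomial (Fin r) k) A := by
    intro q
    induction q using MvPolynomial.induction_on with
    | C a =>
      have : phi I z (C a) = algebraMap (MvPolynomial (Fin r) k) A (C a) := by
        rw [halg, phi_eq, phi_eq]; simp
      rw [this]
      exact Subalgebra.algebraMap_mem _ _
    | add p q hp hq => rw [map_add]; exact add_mem hp hq
    | mul_X p i hp =>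
      rw [map_mul]
      refine mul_mem hp ?_
      refine Fin.cases ?_ (fun i => ?_) i
      · rw [phi_eq, aeval_X]; exact hz0
      · have : phi I z (X i.succ) = algebraMap (MvPolynomial (Fin r) k) A (X i)
            + algebraMap (MvPolynomial (Fin r) k) A (C (b i)) * Ideal.Quotient.mk I (z 0) := by
          rw [halg, halg, phi_eq, phi_eq, phi_eq]
          simp [z']
        rw [this]
        exact add_mem (Subalgebra.algebraMap_mem _ _) (mul_mem (Subalgebra.algebraMap_mem _ _) hz0)
  let g : MvPolynomial (Fin (r+1)) k →+* integralClosure (MvPolynomial (Fin r) k) A :=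
    (phi I z).toRingHom.codRestrict (integralClosure (MvPolynomial (Fin r) k) A) hmem
  have hcomp : (algebraMap (integralClosure (MvPolynomial (Fin r) k) A) A).comp g = (phi I z).toRingHom := by
    ext <;> rfl
  have h3 : (algebraMap (integralClosure (MvPolynomial (Fin r) k) A) A).IsIntegral := by
    refine RingHom.IsIntegral.tower_top g _ ?_
    rw [hcomp]; exact hinteg
  intro x
  have h4 := h3 x
  have h5 : IsIntegral (MvPolynomial (Fin r) k) x :=
    isIntegral_trans (A := integralClosure (MvPolynomial (Fin r) k) A) x h4
  exact h5

theorem aeval_comp_hom {r : ℕ} (z : Fin r → MvPolynomial (Fin (n+1)) k)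
    (hz : ∀ i, (z i).IsHomogeneous 1) (p : MvPolynomial (Fin r) k) (N : ℕ) :
    homogeneousComponent N (aeval z p) = aeval z (homogeneousComponent N p) := by
  conv_lhs => rw [← sum_homogeneousComponent p]
  rw [map_sum, map_sum]
  have h : ∀ i, (aeval z (homogeneousComponent i p)).IsHomogeneous i := by
    intro i
    have := (homogeneousComponent_isHomogeneous i p).aeval z hz
    rwa [one_mul] at this
  rw [Finset.sum_congr rfl fun i _ => homogeneousComponent_of_mem (h i)]
  rw [Finset.sum_ite_eq]
  split_ifs with hN
  · rfl
  · rw [homogeneousComponent_eq_zero, map_zero]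
    simpa using hN

theorem exists_normalization [Infinite k] (I : Ideal (MvPolynomial (Fin (n+1)) k))
    (hI : IsHomogeneousIdeal I) (hne : I ≠ ⊤) :
    ∃ (r : ℕ) (z : Fin r → MvPolynomial (Fin (n+1)) k), (∀ i, (z i).IsHomogeneous 1) ∧
      (phi I z).toRingHom.IsIntegral ∧ ∀ p : MvPolynomial (Fin r) k, aeval z p ∈ I → p = 0 := by
  classical
  have hex : ∃ r : ℕ, ∃ z : Fin r → MvPolynomial (Fin (n+1)) k, (∀ i, (z i).IsHomogeneous 1) ∧
      (phi I z).toRingHom.IsIntegral := by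
    refine ⟨n+1, X, isHomogeneous_X _, ?_⟩
    apply RingHom.isIntegral_of_surjective
    intro x
    obtain ⟨y, rfl⟩ := Ideal.Quotient.mk_surjective x
    refine ⟨y, ?_⟩
    change phi I X y = _
    rw [phi_eq, aeval_X_left_apply]
  obtain ⟨z, hz, hinteg⟩ := Nat.find_spec hex
  have hmin := fun m => Nat.find_min hex (m := m)
  generalize Nat.find hex = r at *
  refine ⟨r, z, hz, hinteg, ?_⟩
  intro p hp
  by_contra hp0
  obtain ⟨N, hN⟩ : ∃ N, homogeneousComponent N p ≠ 0 := by
    by_contra hcon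
    push Not at hcon
    apply hp0
    rw [← sum_homogeneousComponent p]
    exact Finset.sum_eq_zero fun i _ => hcon i
  have hNI : aeval z (homogeneousComponent N p) ∈ I := by
    rw [← aeval_comp_hom z hz]; exact hI _ hp N
  cases r with
  | zero =>
    apply hne
    rw [Ideal.eq_top_iff_one]
    rw [MvPolynomial.eq_C_of_isEmpty p] at hp hp0
    rw [aeval_C] at hp
    have hc : coeff 0 p ≠ 0 := by
      intro h; rw [h] at hp0; simp at hp0
    have := I.mul_mem_left (C (coeff 0 p)⁻¹) hp
    rwa [MvPolynomial.algebraMap_eq, ← C_mul, inv_mul_cancel₀ hc, C_1] at this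
  | succ r =>
    exact hmin r (Nat.lt_succ_self r) (normal_step I z hz hinteg _ (homogeneousComponent_isHomogeneous N p) hN hNI)

end PartC

section PartC2

variable {k : Type*} [Field k] {n : ℕ}

theorem growth (P : Polynomial ℚ) (D δ r : ℕ) (hdeg : P.natDegree ≤ r)
    (h : ∀ᶠ m : ℕ in Filter.atTop, (D : ℚ) * (((m - δ) + r).choose r : ℕ) ≤ P.eval (m : ℚ)) :
    (D : ℚ) ≤ r.factorial * P.coeff r := by
  have hr : (0 : ℚ) < r.factorial := by exact_mod_cast r.factorial_pos
  set Q : Polynomial ℚ := Polynomial.C ((D : ℚ) / r.factorial) * (Polynomial.X - Polynomial.C (δ : ℚ)) ^ r with hQ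
  have hmon : ((Polynomial.X - Polynomial.C (δ : ℚ)) ^ r).Monic := (Polynomial.monic_X_sub_C _).pow r
  have hnd : ((Polynomial.X - Polynomial.C (δ : ℚ)) ^ r).natDegree = r := by
    rw [Polynomial.natDegree_pow, Polynomial.natDegree_X_sub_C, mul_one]
  have hQd : Q.natDegree ≤ r := (Polynomial.natDegree_C_mul_le _ _).trans hnd.le
  have hQc : Q.coeff r = (D : ℚ) / r.factorial := by
    rw [hQ, Polynomial.coeff_C_mul]
    have := hmon.coeff_natDegree
    rw [hnd] at this
    rw [this, mul_one]
  by_contra hcon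
  push Not at hcon
  have hlt : (P - Q).coeff r < 0 := by
    rw [Polynomial.coeff_sub, hQc, sub_neg, lt_div_iff₀ hr]
    linarith
  have hRd : (P - Q).natDegree ≤ r := (Polynomial.natDegree_sub_le _ _).trans (max_le hdeg hQd)
  have hRd' : (P - Q).natDegree = r := le_antisymm hRd (Polynomial.le_natDegree_of_ne_zero hlt.ne)
  have hlc : (P - Q).leadingCoeff < 0 := by
    unfold Polynomial.leadingCoeff; rw [hRd']; exact hlt
  have hge : ∀ᶠ m : ℕ in Filter.atTop, 0 ≤ (P - Q).eval (m : ℚ) := by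
    filter_upwards [h, Filter.eventually_ge_atTop δ] with m hm hδ
    rw [Polynomial.eval_sub, sub_nonneg]
    refine le_trans ?_ hm
    rw [hQ]
    simp only [Polynomial.eval_mul, Polynomial.eval_C, Polynomial.eval_pow, Polynomial.eval_sub, Polynomial.eval_X]
    rw [div_mul_eq_mul_div, mul_div_assoc]
    refine mul_le_mul_of_nonneg_left ?_ (Nat.cast_nonneg D)
    refine le_trans ?_ (Nat.pow_le_choose (α := ℚ) r ((m - δ) + r))
    refine div_le_div_of_nonneg_right ?_ hr.le
    have h1 : (m : ℚ) - δ = ((m - δ : ℕ) : ℚ) := by rw [Nat.cast_sub hδ]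
    rw [h1]
    refine pow_le_pow_left₀ (Nat.cast_nonneg _) ?_ r
    exact_mod_cast (by omega : m - δ ≤ m - δ + r + 1 - r)
  rcases Nat.eq_zero_or_pos r with h0 | hpos
  · obtain ⟨m, hm⟩ := hge.exists
    have : P - Q = Polynomial.C ((P - Q).coeff 0) := Polynomial.eq_C_of_natDegree_le_zero (by omega)
    rw [this, Polynomial.eval_C] at hm
    rw [h0] at hlt
    exact absurd hm (not_le.2 hlt)
  · have ht := Polynomial.tendsto_atBot_of_leadingCoeff_nonpos (P - Q)
      (Polynomial.natDegree_pos_iff_degree_pos.1 (by omega)) hlc.le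
    have ht2 := ht.comp (tendsto_natCast_atTop_atTop (R := ℚ))
    obtain ⟨m, hm1, hm2⟩ := ((ht2.eventually_lt_atBot 0).and hge).exists
    exact absurd hm2 (not_le.2 hm1)

theorem hilbP_spec {I : Ideal (MvPolynomial (Fin (n+1)) k)} (h0 : hilbP k I ≠ 0) :
    ∀ᶠ m : ℕ in Filter.atTop, (hilbF k I m : ℚ) = (hilbP k I).eval (m : ℚ) := by
  unfold hilbP at h0 ⊢
  split_ifs at h0 ⊢ with h
  · exact h.choose_spec
  · exact absurd rfl h0

theorem ne_top_of_hilbP {I : Ideal (MvPolynomial (Fin (n+1)) k)} (h0 : hilbP k I ≠ 0) : I ≠ ⊤ := by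
  intro hI
  apply h0
  have h1 : ∀ m, hilbF k I m = 0 := by
    intro m
    unfold hilbF
    have : Subsingleton (MvPolynomial (Fin (n+1)) k ⧸ I) := Ideal.Quotient.subsingleton_iff.2 hI
    exact Module.finrank_zero_of_subsingleton
  have h2 := hilbP_spec h0
  obtain ⟨N, hN⟩ := Filter.eventually_atTop.1 h2
  refine Polynomial.eq_zero_of_infinite_isRoot _ ?_
  have hinf : (Set.range fun m : ℕ => ((m + N : ℕ) : ℚ)).Infinite :=
    Set.infinite_range_of_injective fun a b hab => by
      have : a + N = b + N := by exact_mod_cast hab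
      omega
  refine hinf.mono ?_
  rintro _ ⟨m, rfl⟩
  change Polynomial.eval _ _ = 0
  rw [← hN (m + N) (by omega), h1]; rfl

theorem exists_struct [Infinite k] {d : ℕ} (I : Ideal (MvPolynomial (Fin (n+1)) k))
    (hIhom : IsHomogeneousIdeal I) (hIunm : IsUnmixed k I d)
    (hIne : hilbP k I ≠ 0) (hIdim : idealDim k I = d) :
    ∃ z : Fin (d+1) → MvPolynomial (Fin (n+1)) k, (∀ i, (z i).IsHomogeneous 1) ∧
      (phi I z).toRingHom.IsIntegral ∧
      ∀ s : MvPolynomial (Fin (d+1)) k, s ≠ 0 → NZ I (aeval z s) := by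
  have hne := ne_top_of_hilbP hIne
  obtain ⟨r, z, hz, hinteg, hinj⟩ := exists_normalization I hIhom hne
  have hleP : ∀ P ∈ associatedPrimes (MvPolynomial (Fin (n+1)) k) (MvPolynomial (Fin (n+1)) k ⧸ I), I ≤ P := by
    intro P hP
    obtain ⟨_, x, hx⟩ := mem_assoc_iff.1 hP
    intro a ha
    exact (hx a).2 (I.mul_mem_right _ ha)
  have hintP : ∀ P ∈ associatedPrimes (MvPolynomial (Fin (n+1)) k) (MvPolynomial (Fin (n+1)) k ⧸ I),
      ((Ideal.Quotient.mk P).comp (aeval z : MvPolynomial (Fin r) k →ₐ[k] _).toRingHom).IsIntegral := by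
    intro P hP
    have h1 : (Ideal.Quotient.mk P).comp (aeval z : MvPolynomial (Fin r) k →ₐ[k] _).toRingHom
      = (Ideal.Quotient.factor (hleP P hP)).comp (phi I z).toRingHom := by
      ext <;> rfl
    rw [h1]
    exact RingHom.IsIntegral.trans _ _ hinteg (RingHom.isIntegral_of_surjective _
      (Ideal.Quotient.factor_surjective (hleP P hP)))
  obtain ⟨P, hP, -⟩ := exists_assoc (J := I) (x := 1) (by rwa [Ne, Ideal.eq_top_iff_one] at hne)
  have hdr : d + 1 ≤ r := by
    have h1 := dim_le_of_integral _ (hintP P hP)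
    rw [hIunm P hP, MvPolynomial.ringKrullDim_of_isNoetherianRing] at h1
    rw [ringKrullDim_eq_zero_of_field, zero_add, Nat.card_fin] at h1
    have h2 : ((d + 1 : ℕ) : WithBot ℕ∞) ≤ ((r : ℕ) : WithBot ℕ∞) := h1
    exact Nat.cast_le.1 h2
  obtain ⟨r', rfl⟩ : ∃ r', r = r' + 1 := ⟨r - 1, by omega⟩
  have hlow : ∀ m, (m + r').choose r' ≤ hilbF k I m := by
    intro m
    have := hilbF_ge (ι := Unit) I z hz (fun _ => 1)
      (fun _ => 0) (fun _ => isHomogeneous_one _ _) (by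
        intro β hβ u
        simp only [Finset.univ_unique, Finset.sum_singleton, mul_one] at hβ
        exact hinj _ hβ) m (by simp)
    simpa using this
  have hr : r' ≤ d := by
    by_contra hcon
    have hnd : (hilbP k I).natDegree = d := hIdim
    have hg := growth (hilbP k I) 1 0 r' (by omega) (by
      filter_upwards [hilbP_spec hIne] with m hm
      rw [← hm]
      have := hlow m
      simp only [Nat.cast_one, one_mul, Nat.sub_zero]
      exact_mod_cast this)
    rw [Polynomial.coeff_eq_zero_of_natDegree_lt (by omega)] at hg
    norm_num at hg
  obtain rfl : r' = d := by omega
  refine ⟨z, hz, hinteg, fun s hs => nz_of_notMem fun P hP hsP => ?_⟩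
  let f := (Ideal.Quotient.mk P).comp (aeval z : MvPolynomial (Fin (r'+1)) k →ₐ[k] _).toRingHom
  have hf : f.IsIntegral := hintP P hP
  have hfs : f s = 0 := Ideal.Quotient.eq_zero_iff_mem.2 hsP
  let g : (MvPolynomial (Fin (r'+1)) k ⧸ Ideal.span {s}) →+* (MvPolynomial (Fin (n+1)) k ⧸ P) :=
    Ideal.Quotient.lift _ f ((RingHom.ker f).span_singleton_le_iff_mem.mpr hfs)
  have hg : g.IsIntegral := by
    refine RingHom.IsIntegral.tower_top (Ideal.Quotient.mk (Ideal.span {s})) g ?_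
    have : g.comp (Ideal.Quotient.mk (Ideal.span {s})) = f := by
      ext <;> rfl
    rw [this]; exact hf
  have h1 := dim_le_of_integral g hg
  have h2 := ringKrullDim_quotient_succ_le_of_nonZeroDivisor (mem_nonZeroDivisors_of_ne_zero hs)
  rw [MvPolynomial.ringKrullDim_of_isNoetherianRing] at h2
  rw [hIunm P hP] at h1
  have h3 := (add_le_add_left h1 1).trans h2
  rw [ringKrullDim_eq_zero_of_field, zero_add, Nat.card_fin] at h3
  have h4 : ((r' + 1 : ℕ) : WithBot ℕ∞) + ((1 : ℕ) : WithBot ℕ∞) ≤ ((r' + 1 : ℕ) : WithBot ℕ∞) := h3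
  rw [← Nat.cast_add] at h4
  have h5 := Nat.cast_le.1 h4
  omega

end PartC2

section PartD1

theorem exists_generic_basis {B A ι : Type*} [CommRing B] [IsDomain B] [IsNoetherianRing B]
    [AddCommGroup A] [Module B A] [Module.Finite B A] (v : ι → A)
    (hv : Submodule.span B (Set.range v) = ⊤) :
    ∃ t : Set ι, t.Finite ∧ LinearIndepOn B v t ∧ ∃ c : B, c ≠ 0 ∧
      ∀ a : A, c • a ∈ Submodule.span B (v '' t) := by
  obtain ⟨t, ht, hmax⟩ := exists_maximal_linearIndepOn B v
  have hfin : t.Finite := by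
    have : Finite t := LinearIndependent.finite_of_isNoetherian ht
    exact t.toFinite
  refine ⟨t, hfin, ht, ?_⟩
  set F := Submodule.span B (v '' t) with hF
  have htor : ∀ a : A, ∃ c : B, c ≠ 0 ∧ c • a ∈ F := by
    intro a
    have ha : a ∈ Submodule.span B (Set.range v) := by rw [hv]; trivial
    induction ha using Submodule.span_induction with
    | mem x hx =>
      obtain ⟨i, rfl⟩ := hx
      by_cases hi : i ∈ t
      · exact ⟨1, one_ne_zero, by rw [one_smul]; exact Submodule.subset_span ⟨i, hi, rfl⟩⟩
      · exact hmax i hi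
    | zero => exact ⟨1, one_ne_zero, by simp⟩
    | add x y _ _ hx hy =>
      obtain ⟨c, hc, hx⟩ := hx
      obtain ⟨c', hc', hy⟩ := hy
      refine ⟨c * c', mul_ne_zero hc hc', ?_⟩
      rw [smul_add]
      refine add_mem ?_ ?_
      · rw [mul_comm, mul_smul]; exact F.smul_mem _ hx
      · rw [mul_smul]; exact F.smul_mem _ hy
    | smul b x _ hx =>
      obtain ⟨c, hc, hx⟩ := hx
      refine ⟨c, hc, ?_⟩
      rw [smul_comm]; exact F.smul_mem _ hx
  have hT : Module.IsTorsion B (A ⧸ F) := by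
    intro x
    obtain ⟨a, rfl⟩ := Submodule.Quotient.mk_surjective _ x
    obtain ⟨c, hc, ha⟩ := htor a
    refine ⟨⟨c, mem_nonZeroDivisors_of_ne_zero hc⟩, ?_⟩
    change c • (Submodule.Quotient.mk a : A ⧸ F) = 0
    rw [← Submodule.Quotient.mk_smul, Submodule.Quotient.mk_eq_zero]
    exact ha
  obtain ⟨c, hc1, hc2⟩ := Submodule.annihilator_top_inter_nonZeroDivisors hT
  refine ⟨c, nonZeroDivisors.ne_zero hc2, fun a => ?_⟩
  have := Submodule.mem_annihilator.1 hc1 (Submodule.Quotient.mk a) trivial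
  rwa [← Submodule.Quotient.mk_smul, Submodule.Quotient.mk_eq_zero] at this

variable {k : Type*} [Field k] {n : ℕ}

theorem exists_frame {d : ℕ} (I : Ideal (MvPolynomial (Fin (n+1)) k))
    (hI : IsHomogeneousIdeal I) (hne : I ≠ ⊤)
    (z : Fin (d+1) → MvPolynomial (Fin (n+1)) k) (hz : ∀ i, (z i).IsHomogeneous 1)
    (hinteg : (phi I z).toRingHom.IsIntegral)
    (hnz : ∀ s : MvPolynomial (Fin (d+1)) k, s ≠ 0 → NZ I (aeval z s)) :
    ∃ (D : ℕ) (b : Fin D → MvPolynomial (Fin (n+1)) k) (δ : Fin D → ℕ)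
      (s : MvPolynomial (Fin (d+1)) k) (ρ : ℕ),
      1 ≤ D ∧ (∀ i, (b i).IsHomogeneous (δ i)) ∧
      (∀ β : Fin D → MvPolynomial (Fin (d+1)) k, ∑ i, aeval z (β i) * b i ∈ I → ∀ i, β i = 0) ∧
      s ≠ 0 ∧ s.IsHomogeneous ρ ∧
      ∀ (M : ℕ) (a : MvPolynomial (Fin (n+1)) k), a.IsHomogeneous M →
        ∃ β : Fin D → MvPolynomial (Fin (d+1)) k, (∀ i, ∃ N ≤ M + ρ, (β i).IsHomogeneous N) ∧
          aeval z s * a - ∑ i, aeval z (β i) * b i ∈ I := by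
  classical
  let A := MvPolynomial (Fin (n+1)) k ⧸ I
  let B := MvPolynomial (Fin (d+1)) k
  let _ : Algebra B A := (phi I z).toRingHom.toAlgebra
  have halg : ∀ q, algebraMap B A q = Ideal.Quotient.mk I (aeval z q) := fun q => rfl
  have hsm : ∀ (q : B) (a : MvPolynomial (Fin (n+1)) k), q • (Ideal.Quotient.mk I a : A) =
      Ideal.Quotient.mk I (aeval z q * a) := by
    intro q a
    rw [Algebra.smul_def, halg, map_mul]
  have hst : IsScalarTower k B A := by
    refine IsScalarTower.of_algebraMap_eq fun c => ?_
    exact ((phi I z).commutes c).symm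
  have : Algebra.IsIntegral B A := ⟨hinteg⟩
  have : Algebra.FiniteType B A := Algebra.FiniteType.of_restrictScalars_finiteType k B A
  have hfin : Module.Finite B A := Algebra.IsIntegral.finite
  let v : (Fin (n+1) →₀ ℕ) → A := fun m => Ideal.Quotient.mk I (monomial m 1)
  have hv : Submodule.span B (Set.range v) = ⊤ := by
    rw [eq_top_iff]
    rintro x -
    obtain ⟨p, rfl⟩ := Ideal.Quotient.mk_surjective x
    induction p using MvPolynomial.induction_on' with
    | monomial m c =>
      have : Ideal.Quotient.mk I (monomial m c) = (C c : B) • v m := by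
        rw [hsm, aeval_C, MvPolynomial.algebraMap_eq, C_mul_monomial, mul_one]
      rw [this]
      exact Submodule.smul_mem _ _ (Submodule.subset_span ⟨m, rfl⟩)
    | add p q hp hq => rw [map_add]; exact add_mem hp hq
  obtain ⟨t, htf, htl, c, hc0, hc⟩ := exists_generic_basis v hv
  have := htf.fintype
  let e : Fin (Fintype.card t) ≃ t := (Fintype.equivFin t).symm
  have hli : LinearIndependent B (fun i => v (e i)) := htl.comp e e.injective
  have hrange : Set.range (fun i => v (e i)) = v '' t := by
    have : (fun i => v (e i)) = (fun x : t => v x) ∘ e := rfl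
    rw [this, EquivLike.range_comp]
    ext x; simp
  rw [← hrange] at hc
  let b : Fin (Fintype.card t) → MvPolynomial (Fin (n+1)) k := fun i => monomial (e i : Fin (n+1) →₀ ℕ) 1
  let δ : Fin (Fintype.card t) → ℕ := fun i => (e i : Fin (n+1) →₀ ℕ).degree
  have hb : ∀ i, (b i).IsHomogeneous (δ i) := fun i => isHomogeneous_monomial _ rfl
  have hsum : ∀ β : Fin (Fintype.card t) → B, ∑ i, β i • v (e i) =
      Ideal.Quotient.mk I (∑ i, aeval z (β i) * b i) := by
    intro β
    rw [map_sum]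
    exact Finset.sum_congr rfl fun i _ => hsm _ _
  have hrel : ∀ a : MvPolynomial (Fin (n+1)) k, ∃ β : Fin (Fintype.card t) → B,
      aeval z c * a - ∑ i, aeval z (β i) * b i ∈ I := by
    intro a
    obtain ⟨β, hβ⟩ := (Submodule.mem_span_range_iff_exists_fun B).1 (hc (Ideal.Quotient.mk I a))
    refine ⟨β, ?_⟩
    rw [hsum, hsm] at hβ
    exact Ideal.Quotient.eq.1 hβ.symm
  obtain ⟨ρ, hρ⟩ : ∃ N, homogeneousComponent N c ≠ 0 := by
    by_contra hcon
    push Not at hcon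
    apply hc0
    rw [← sum_homogeneousComponent c]
    exact Finset.sum_eq_zero fun i _ => hcon i
  refine ⟨Fintype.card t, b, δ, homogeneousComponent ρ c, ρ, ?_, hb, ?_, hρ,
    homogeneousComponent_isHomogeneous _ _, ?_⟩
  · by_contra hD
    have hD0 : Fintype.card t = 0 := by omega
    have hemp : IsEmpty (Fin (Fintype.card t)) := by rw [hD0]; infer_instance
    obtain ⟨β, hβ⟩ := hrel 1
    rw [Finset.univ_eq_empty, Finset.sum_empty, sub_zero] at hβ
    exact hne ((Ideal.eq_top_iff_one _).2 (hnz c hc0 1 hβ))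
  · intro β hβ i
    refine Fintype.linearIndependent_iff.1 hli β ?_ i
    rw [hsum]
    exact Ideal.Quotient.eq_zero_iff_mem.2 hβ
  · intro M a ha
    obtain ⟨β, hβ⟩ := hrel a
    refine ⟨fun i => if δ i ≤ ρ + M then homogeneousComponent (ρ + M - δ i) (β i) else 0, ?_, ?_⟩
    · intro i
      dsimp only
      split_ifs
      · exact ⟨ρ + M - δ i, by omega, homogeneousComponent_isHomogeneous _ _⟩
      · exact ⟨0, by omega, isHomogeneous_zero _ _ _⟩
    · have h1 := hI _ hβ (ρ + M)
      rw [map_sub, hom_comp_mul ha, aeval_comp_hom z hz, map_sum] at h1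
      convert h1 using 2
      refine Finset.sum_congr rfl fun i _ => ?_
      dsimp only
      split_ifs with h
      · have h2 : ρ + M = (ρ + M - δ i) + δ i := by omega
        conv_rhs => rw [h2]
        rw [hom_comp_mul (hb i), aeval_comp_hom z hz]
      · rw [hom_comp_mul_lt (hb i) (by omega), map_zero, zero_mul]

end PartD1

section PartD2

variable {k : Type*} [Field k] {n : ℕ}

/-- vanishing order at least `N` at the origin -/
def OrdGe {σ : Type*} (N : ℕ) (p : MvPolynomial σ k) : Prop := ∀ γ : σ →₀ ℕ, γ.degree < N → coeff γ p = 0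

theorem OrdGe.mul {σ : Type*} {N M : ℕ} {p q : MvPolynomial σ k} (hp : OrdGe N p) (hq : OrdGe M q) :
    OrdGe (N + M) (p * q) := by
  classical
  intro γ hγ
  rw [coeff_mul]
  refine Finset.sum_eq_zero fun x hx => ?_
  rw [Finset.HasAntidiagonal.mem_antidiagonal] at hx
  have h1 : x.1.degree + x.2.degree = γ.degree := by rw [← hx, map_add]
  by_cases h : x.1.degree < N
  · rw [hp _ h, zero_mul]
  · rw [hq _ (by omega), mul_zero]

theorem OrdGe.sum {σ ι : Type*} {N : ℕ} (t : Finset ι) {p : ι → MvPolynomial σ k} (hp : ∀ i, OrdGe N (p i)) :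
    OrdGe N (∑ i ∈ t, p i) := by
  intro γ hγ
  rw [coeff_sum]
  exact Finset.sum_eq_zero fun i _ => hp i γ hγ

theorem OrdGe.cancel {σ : Type*} {N : ℕ} {u p : MvPolynomial σ k} (hu : coeff 0 u ≠ 0)
    (h : OrdGe N (u * p)) : OrdGe N p := by
  classical
  have key : ∀ e, ∀ γ : σ →₀ ℕ, γ.degree = e → e < N → coeff γ p = 0 := by
    intro e
    induction e using Nat.strong_induction_on with
    | _ e ih =>
    intro γ hγ he
    have h1 := h γ (by omega)
    rw [coeff_mul, Finset.sum_eq_single (0, γ)] at h1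
    · exact (mul_eq_zero.1 h1).resolve_left hu
    · rintro ⟨x, y⟩ hxy hne
      rw [Finset.HasAntidiagonal.mem_antidiagonal] at hxy
      have h2 : x.degree + y.degree = γ.degree := by rw [← hxy, map_add]
      have hx : x.degree ≠ 0 := by
        intro h0
        rw [Finsupp.degree_eq_zero_iff] at h0
        apply hne
        simp only at hxy
        rw [h0, zero_add] at hxy
        rw [h0, hxy]
      dsimp only
      rw [ih y.degree (by omega) y rfl (by omega), mul_zero]
    · intro hno
      exact absurd (by simp) hno
  exact fun γ hγ => key _ γ rfl hγ

/-- dehomogenization and translation -/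
noncomputable def theta {d : ℕ} (a : Fin d → k) : MvPolynomial (Fin (d+1)) k →ₐ[k] MvPolynomial (Fin d) k :=
  aeval (Fin.cons 1 (fun i => X i + C (a i)) : Fin (d+1) → MvPolynomial (Fin d) k)

theorem eval_theta {d : ℕ} (a c : Fin d → k) (p : MvPolynomial (Fin (d+1)) k) :
    eval c (theta a p) = eval (Fin.cons 1 (fun i => c i + a i) : Fin (d+1) → k) p := by
  have : (aeval c : MvPolynomial (Fin d) k →ₐ[k] k).comp (theta a) =
      aeval (Fin.cons 1 (fun i => c i + a i) : Fin (d+1) → k) := by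
    apply MvPolynomial.algHom_ext
    intro i
    refine Fin.cases ?_ (fun i => ?_) i
    · simp [theta]
    · simp [theta]
  exact DFunLike.congr_fun this p

theorem theta_totalDegree {d : ℕ} (a : Fin d → k) (p : MvPolynomial (Fin (d+1)) k) :
    (theta a p).totalDegree ≤ p.totalDegree := by
  unfold theta
  rw [aeval_def, eval₂_eq]
  refine totalDegree_finsetSum_le fun m hm => ?_
  refine (totalDegree_mul _ _).trans ?_
  rw [MvPolynomial.algebraMap_eq, totalDegree_C, zero_add]
  refine (totalDegree_finsetProd _ _).trans ?_
  refine le_trans ?_ (le_totalDegree hm)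
  unfold Finsupp.sum
  refine Finset.sum_le_sum fun i _ => ?_
  refine (totalDegree_pow _ _).trans ?_
  have : ((Fin.cons 1 (fun i => X i + C (a i)) : Fin (d+1) → MvPolynomial (Fin d) k) i).totalDegree ≤ 1 := by
    refine Fin.cases ?_ (fun i => ?_) i
    · simp
    · simp only [Fin.cons_succ]
      refine (totalDegree_add _ _).trans ?_
      simp
  have h2 := Nat.mul_le_mul_left (m i) this
  simpa using h2

theorem theta_eq_zero [Infinite k] {d N : ℕ} (a : Fin d → k) {p : MvPolynomial (Fin (d+1)) k}
    (hp : p.IsHomogeneous N) (h : theta a p = 0) : p = 0 := by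
  by_contra h0
  obtain ⟨b, hb⟩ := exists_point hp h0
  apply hb
  have := eval_theta a (fun i => b i - a i) p
  rw [h, map_zero] at this
  simpa using this.symm

theorem eq_zero_of_ord [Infinite k] {d N M : ℕ} (a : Fin d → k) {p : MvPolynomial (Fin (d+1)) k}
    (hp : p.IsHomogeneous N) (hNM : N < M) (h : OrdGe M (theta a p)) : p = 0 := by
  apply theta_eq_zero a hp
  ext γ
  rw [coeff_zero]
  by_cases hγ : γ.degree < M
  · exact h γ hγ
  · apply coeff_eq_zero_of_totalDegree_lt
    have h1 := (theta_totalDegree a p).trans hp.totalDegree_le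
    have h2 : γ.degree = ∑ i ∈ γ.support, γ i := rfl
    omega

theorem card_le_degree (d m : ℕ) : ∃ Γ : Finset (Fin d →₀ ℕ), Γ.card ≤ (m + d).choose d ∧
    ∀ γ : Fin d →₀ ℕ, γ.degree ≤ m → γ ∈ Γ := by
  classical
  refine ⟨(Finset.finsuppAntidiag (Finset.univ : Finset (Fin (d+1))) m).image Finsupp.tail, ?_, ?_⟩
  · refine Finset.card_image_le.trans ?_
    rw [Finset.card_finsuppAntidiag_nat_eq_choose]
    simp
    rw [Nat.choose_symm_add.symm]
    apply le_of_eq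
    congr 1; omega
  · intro γ hγ
    rw [Finset.mem_image]
    refine ⟨Finsupp.cons (m - γ.degree) γ, ?_, Finsupp.tail_cons _ _⟩
    rw [Finset.mem_finsuppAntidiag]
    refine ⟨?_, Finset.subset_univ _⟩
    rw [Fin.sum_univ_succ]
    simp only [Finsupp.cons_zero, Finsupp.cons_succ]
    rw [← Finsupp.degree_eq_sum]
    omega

theorem product_rel {d D : ℕ} {I : Ideal (MvPolynomial (Fin (n+1)) k)}
    {z : Fin (d+1) → MvPolynomial (Fin (n+1)) k}
    {b : Fin D → MvPolynomial (Fin (n+1)) k} {s : MvPolynomial (Fin (d+1)) k}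
    (hind : ∀ β : Fin D → MvPolynomial (Fin (d+1)) k, ∑ i, aeval z (β i) * b i ∈ I → ∀ i, β i = 0)
    {x y : MvPolynomial (Fin (n+1)) k} {ε β : Fin D → MvPolynomial (Fin (d+1)) k}
    {γ : Fin D → Fin D → MvPolynomial (Fin (d+1)) k}
    (h1 : aeval z s * (x * y) - ∑ i, aeval z (ε i) * b i ∈ I)
    (h2 : aeval z s * y - ∑ i, aeval z (β i) * b i ∈ I)
    (h3 : ∀ i, aeval z s * (x * b i) - ∑ j, aeval z (γ i j) * b j ∈ I) (j : Fin D) :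
    s * ε j = ∑ i, β i * γ i j := by
  rw [← sub_eq_zero]
  refine hind (fun j => s * ε j - ∑ i, β i * γ i j) ?_ j
  have key : ∑ j, aeval z (s * ε j - ∑ i, β i * γ i j) * b j =
      - (aeval z s * (aeval z s * (x * y) - ∑ i, aeval z (ε i) * b i)) +
      aeval z s * x * (aeval z s * y - ∑ i, aeval z (β i) * b i) +
      ∑ i, aeval z (β i) * (aeval z s * (x * b i) - ∑ j, aeval z (γ i j) * b j) := by
    have e1 : ∑ j, aeval z (s * ε j - ∑ i, β i * γ i j) * b j =
        aeval z s * ∑ j, aeval z (ε j) * b j - ∑ i, aeval z (β i) * ∑ j, aeval z (γ i j) * b j := by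
      simp only [map_sub, map_mul, map_sum, sub_mul, Finset.sum_sub_distrib, Finset.mul_sum, Finset.sum_mul]
      rw [Finset.sum_comm (s := Finset.univ) (t := Finset.univ)
        (f := fun i j => aeval z (β j) * aeval z (γ j i) * b i)]
      simp only [mul_assoc]
    have e2 : ∑ i, aeval z (β i) * (aeval z s * (x * b i) - ∑ j, aeval z (γ i j) * b j) =
        aeval z s * x * ∑ i, aeval z (β i) * b i - ∑ i, aeval z (β i) * ∑ j, aeval z (γ i j) * b j := by
      simp only [mul_sub, Finset.sum_sub_distrib]
      congr 1
      rw [Finset.mul_sum]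
      exact Finset.sum_congr rfl fun i _ => by ring
    rw [e1, e2]; ring
  rw [key]
  exact add_mem (add_mem (neg_mem (I.mul_mem_left _ h1)) (I.mul_mem_left _ h2))
    (Ideal.sum_mem _ fun i _ => I.mul_mem_left _ (h3 i))

theorem hilbF_le [Infinite k] {d D : ℕ} (I : Ideal (MvPolynomial (Fin (n+1)) k)) (hrad : I.IsRadical)
    (z : Fin (d+1) → MvPolynomial (Fin (n+1)) k)
    (hnz : ∀ s : MvPolynomial (Fin (d+1)) k, s ≠ 0 → NZ I (aeval z s))
    (b : Fin D → MvPolynomial (Fin (n+1)) k) (δ : Fin D → ℕ)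
    (s : MvPolynomial (Fin (d+1)) k) (ρ : ℕ)
    (hb : ∀ i, (b i).IsHomogeneous (δ i))
    (hind : ∀ β : Fin D → MvPolynomial (Fin (d+1)) k, ∑ i, aeval z (β i) * b i ∈ I → ∀ i, β i = 0)
    (hs0 : s ≠ 0) (hs : s.IsHomogeneous ρ)
    (hrel : ∀ (M : ℕ) (a : MvPolynomial (Fin (n+1)) k), a.IsHomogeneous M →
        ∃ β : Fin D → MvPolynomial (Fin (d+1)) k, (∀ i, ∃ N ≤ M + ρ, (β i).IsHomogeneous N) ∧
          aeval z s * a - ∑ i, aeval z (β i) * b i ∈ I) (m : ℕ) :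
    hilbF k I m ≤ D * (m + d).choose d := by
  classical
  obtain ⟨a, ha⟩ := exists_point hs hs0
  have hu : coeff 0 (theta a s) ≠ 0 := by
    have h1 := eval_theta a 0 s
    have h2 : eval (0 : Fin d → k) (theta a s) = coeff 0 (theta a s) := by
      rw [← MvPolynomial.constantCoeff_eq, MvPolynomial.eval_zero]
    rw [← h2, h1]
    simpa using ha
  obtain ⟨Γ, hΓc, hΓ⟩ := card_le_degree d m
  have huniq : ∀ {f : MvPolynomial (Fin (n+1)) k} {β β' : Fin D → MvPolynomial (Fin (d+1)) k},
      aeval z s * f - ∑ i, aeval z (β i) * b i ∈ I → aeval z s * f - ∑ i, aeval z (β' i) * b i ∈ I →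
      β = β' := by
    intro f β β' h h'
    funext i
    rw [← sub_eq_zero]
    refine hind (fun i => β i - β' i) ?_ i
    have := sub_mem h' h
    convert this using 1
    simp only [map_sub, sub_mul, Finset.sum_sub_distrib]
    ring
  choose Ψ hΨ1 hΨ2 using fun f : homogeneousSubmodule (Fin (n+1)) k m => hrel m f f.2
  let ψ : homogeneousSubmodule (Fin (n+1)) k m →ₗ[k] (Fin D → MvPolynomial (Fin (d+1)) k) :=
    { toFun := Ψ
      map_add' := by
        intro f g
        refine huniq (hΨ2 (f + g)) ?_
        have := add_mem (hΨ2 f) (hΨ2 g)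
        convert this using 1
        simp only [Pi.add_apply, map_add, add_mul, Finset.sum_add_distrib, Submodule.coe_add]
        ring
      map_smul' := by
        intro c f
        refine huniq (hΨ2 (c • f)) ?_
        have := I.mul_mem_left (C c) (hΨ2 f)
        convert this using 1
        simp only [Pi.smul_apply, Submodule.coe_smul, RingHom.id_apply, mul_sub, Finset.mul_sum,
          MvPolynomial.smul_eq_C_mul]
        congr 1
        · ring
        · exact Finset.sum_congr rfl fun i _ => by
            rw [map_mul, aeval_C, MvPolynomial.algebraMap_eq]; ring }
  let L : homogeneousSubmodule (Fin (n+1)) k m →ₗ[k] (Fin D × Γ → k) :=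
    LinearMap.pi fun x => (MvPolynomial.lcoeff k (x.2 : Fin d →₀ ℕ)) ∘ₗ (theta a).toLinearMap ∘ₗ
      (LinearMap.proj x.1) ∘ₗ ψ
  have hL : ∀ f x, L f x = coeff (x.2 : Fin d →₀ ℕ) (theta a (Ψ f x.1)) := fun f x => rfl
  have hker : ∀ f, L f = 0 → (f : MvPolynomial (Fin (n+1)) k) ∈ I := by
    intro f hf
    have hf0 : ∀ i, OrdGe (m + 1) (theta a (Ψ f i)) := by
      intro i γ hγ
      have := congrFun hf (i, ⟨γ, hΓ γ (by omega)⟩)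
      rwa [hL] at this
    have hfb : ∀ i, ∀ γ : Fin D → MvPolynomial (Fin (d+1)) k,
        aeval z s * (f * b i) - ∑ j, aeval z (γ j) * b j ∈ I → ∀ j, OrdGe (m + 1) (theta a (γ j)) := by
      intro i γ hγ j
      choose η hη1 hη2 using fun l => hrel _ _ ((hb i).mul (hb l))
      rw [mul_comm (f : MvPolynomial (Fin (n+1)) k)] at hγ
      have h1 := product_rel hind hγ (hΨ2 f) hη2 j
      apply OrdGe.cancel hu
      rw [← map_mul, h1, map_sum]
      refine OrdGe.sum _ fun l => ?_
      rw [map_mul]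
      have := OrdGe.mul (hf0 l) (M := 0) (q := theta a (η l j)) (fun γ hγ => absurd hγ (by omega))
      simpa using this
    choose η hη1 hη2 using fun l => hrel _ _ (IsHomogeneous.mul f.2 (hb l))
    have hpow : ∀ N, ∀ γ : Fin D → MvPolynomial (Fin (d+1)) k,
        aeval z s * ((f : MvPolynomial (Fin (n+1)) k) ^ N) - ∑ j, aeval z (γ j) * b j ∈ I →
        ∀ j, OrdGe (N * (m + 1)) (theta a (γ j)) := by
      intro N
      induction N with
      | zero => intro γ _ j γ' h; omega
      | succ N ih =>
        intro γ hγ j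
        obtain ⟨β, -, hβ⟩ := hrel _ _ (IsHomogeneous.pow f.2 N)
        rw [pow_succ'] at hγ
        have h1 := product_rel hind hγ hβ hη2 j
        apply OrdGe.cancel hu
        rw [← map_mul, h1, map_sum, Nat.succ_mul]
        refine OrdGe.sum _ fun l => ?_
        rw [map_mul]
        exact OrdGe.mul (ih β hβ l) (hfb l _ (hη2 l) j)
    obtain ⟨β, hβ1, hβ2⟩ := hrel _ _ (IsHomogeneous.pow f.2 (ρ + 1))
    have hβ0 : ∀ j, β j = 0 := by
      intro j
      obtain ⟨N, hN, hh⟩ := hβ1 j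
      refine eq_zero_of_ord a hh ?_ (hpow (ρ + 1) β hβ2 j)
      have : (ρ + 1) * (m + 1) = m * (ρ + 1) + ρ + 1 := by ring
      omega
    have h2 : aeval z s * ((f : MvPolynomial (Fin (n+1)) k) ^ (ρ + 1)) ∈ I := by
      have : ∑ j, aeval z (β j) * b j = 0 := Finset.sum_eq_zero fun j _ => by
        rw [hβ0 j, map_zero, zero_mul]
      rwa [this, sub_zero] at hβ2
    exact hrad ⟨_, hnz s hs0 _ h2⟩
  have := finite_homog (k := k) (σ := Fin (n+1)) m
  unfold hilbF
  set q := (Ideal.Quotient.mkₐ k I).toLinearMap ∘ₗ (homogeneousSubmodule (Fin (n+1)) k m).subtype with hq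
  have h1 := LinearMap.finrank_range_add_finrank_ker q
  rw [hq, LinearMap.range_comp, Submodule.range_subtype, ← hq] at h1
  have h2 := LinearMap.finrank_range_add_finrank_ker L
  have h3 : Module.finrank k (LinearMap.range L) ≤ D * (m + d).choose d := by
    refine (Submodule.finrank_le _).trans ?_
    rw [Module.finrank_fintype_fun_eq_card]
    simp only [Fintype.card_prod, Fintype.card_fin, Fintype.card_coe]
    exact Nat.mul_le_mul_left _ hΓc
  have h4 : LinearMap.ker L ≤ LinearMap.ker q := by
    intro f hf
    exact Ideal.Quotient.eq_zero_iff_mem.2 (hker f hf)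
  have h5 := Submodule.finrank_mono h4
  omega

end PartD2

section PartE

variable {k : Type*} [Field k] {n : ℕ}

theorem exists_bound [Infinite k] {d : ℕ} (I : Ideal (MvPolynomial (Fin (n+1)) k))
    (hIhom : IsHomogeneousIdeal I) (hIrad : I.IsRadical) (hIunm : IsUnmixed k I d)
    (hIne : hilbP k I ≠ 0) (hIdim : idealDim k I = d) :
    1 ≤ idealDeg k I ∧ ∀ m, hilbF k I m ≤ idealDeg k I * (m + d).choose d := by
  obtain ⟨z, hz, hinteg, hnz⟩ := exists_struct I hIhom hIunm hIne hIdim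
  obtain ⟨D, b, δ, s, ρ, hD, hb, hind, hs0, hs, hrel⟩ :=
    exists_frame I hIhom (ne_top_of_hilbP hIne) z hz hinteg hnz
  have hle := hilbF_le I hIrad z hnz b δ s ρ hb hind hs0 hs hrel
  have hDd : D ≤ idealDeg k I := by
    have hnd : (hilbP k I).natDegree = d := hIdim
    have hg := growth (hilbP k I) D (Finset.univ.sup δ) d hnd.le (by
      filter_upwards [hilbP_spec hIne, Filter.eventually_ge_atTop (Finset.univ.sup δ)] with m hm hmδ
      rw [← hm]
      have hδ : ∀ i, δ i ≤ Finset.univ.sup δ := fun i => Finset.le_sup (Finset.mem_univ i)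
      have h1 := hilbF_ge I z hz b δ hb hind m (fun i => (hδ i).trans hmδ)
      have h2 : D * ((m - Finset.univ.sup δ) + d).choose d ≤ ∑ i, ((m - δ i) + d).choose d := by
        calc D * ((m - Finset.univ.sup δ) + d).choose d
            = ∑ _i : Fin D, ((m - Finset.univ.sup δ) + d).choose d := by simp
          _ ≤ _ := Finset.sum_le_sum fun i _ => Nat.choose_le_choose _ (by have := hδ i; omega)
      exact_mod_cast h2.trans h1)
    unfold idealDeg
    apply Nat.le_floor
    rw [Polynomial.leadingCoeff, hnd]
    exact hg
  exact ⟨hD.trans hDd, fun m => (hle m).trans (Nat.mul_le_mul_right _ hDd)⟩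

theorem numeric (d t m D : ℕ) (h : (d + t).factorial * D < (m + 1) ^ t) :
    D * (m + d).choose d < (m + (d + t)).choose (d + t) := by
  have h1 := Nat.ascFactorial_eq_factorial_mul_choose m (d + t)
  have h2 := Nat.ascFactorial_eq_factorial_mul_choose m d
  have h3 := Nat.ascFactorial_mul_ascFactorial (m + 1) d t
  have h4 : (m + 1) ^ t ≤ (m + 1 + d).ascFactorial t :=
    (Nat.pow_le_pow_left (by omega) t).trans (Nat.pow_succ_le_ascFactorial _ _)
  have hc : 0 < (m + d).choose d := Nat.choose_pos (by omega)
  have hd : 0 < d.factorial := d.factorial_pos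
  have hf : 0 < (d + t).factorial := Nat.factorial_pos _
  apply Nat.lt_of_mul_lt_mul_left (a := (d + t).factorial)
  rw [← h1, ← h3, h2]
  calc (d + t).factorial * (D * (m + d).choose d)
      = ((d + t).factorial * D) * (m + d).choose d := by ring
    _ < (m + 1) ^ t * (m + d).choose d := Nat.mul_lt_mul_of_pos_right h hc
    _ ≤ (m + 1 + d).ascFactorial t * (d.factorial * (m + d).choose d) :=
        Nat.mul_le_mul h4 (Nat.le_mul_of_pos_left _ hd)
    _ = _ := by ring

theorem exists_root (x t : ℕ) (hx : 1 ≤ x) :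
    ∃ m : ℕ, 1 ≤ m ∧ (m : ℝ) ≤ (x : ℝ) ^ ((1 : ℝ) / ((t : ℕ) + 1)) ∧ x < (m + 1) ^ (t + 1) := by
  have hx1 : (1 : ℝ) ≤ x := by exact_mod_cast hx
  have ht : (0 : ℝ) < (t : ℝ) + 1 := by positivity
  have h1 : (1 : ℝ) ≤ (x : ℝ) ^ ((1 : ℝ) / ((t : ℕ) + 1)) :=
    Real.one_le_rpow hx1 (by positivity)
  refine ⟨⌊(x : ℝ) ^ ((1 : ℝ) / ((t : ℕ) + 1))⌋₊, ?_, ?_, ?_⟩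
  · exact Nat.le_floor (by simpa using h1)
  · exact Nat.floor_le (by linarith)
  · have h2 := Nat.lt_floor_add_one ((x : ℝ) ^ ((1 : ℝ) / ((t : ℕ) + 1)))
    have h3 : ((x : ℝ) ^ ((1 : ℝ) / ((t : ℕ) + 1))) ^ (t + 1) = x := by
      rw [← Real.rpow_natCast, ← Real.rpow_mul (by linarith)]
      push_cast
      rw [one_div, inv_mul_cancel₀ ht.ne', Real.rpow_one]
    have h4 := pow_lt_pow_left₀ h2 (by linarith) (Nat.succ_ne_zero t)
    rw [Nat.succ_eq_add_one, h3] at h4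
    exact_mod_cast h4

theorem exists_seq [Infinite k] {d : ℕ} (I : Ideal (MvPolynomial (Fin (n+1)) k)) (D : ℕ) (hD : 1 ≤ D)
    (hbd : ∀ m, hilbF k I m ≤ D * (m + d).choose d) (t : ℕ) :
    ∀ J : Ideal (MvPolynomial (Fin (n+1)) k), IsHomogeneousIdeal J → Dep (d + t + 1) J →
    ∃ f : Fin t → MvPolynomial (Fin (n+1)) k,
      (∀ j, f j ∈ I ∧ ∃ m : ℕ, 1 ≤ m ∧ (f j).IsHomogeneous m ∧
        (m : ℝ) ≤ (((d + (j : ℕ) + 1).factorial * D : ℕ) : ℝ) ^ ((1 : ℝ) / ((j : ℕ) + 1))) ∧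
      Reg J (List.ofFn f) := by
  induction t with
  | zero =>
    intro J _ _
    exact ⟨Fin.elim0, fun j => j.elim0, by simp [Reg]⟩
  | succ t ih =>
    intro J hJ hdep
    obtain ⟨m, hm1, hmle, hmlt⟩ := exists_root ((d + t + 1).factorial * D) t
      (Nat.one_le_iff_ne_zero.2 (Nat.mul_ne_zero (Nat.factorial_ne_zero _) (by omega)))
    have hlt := numeric d (t + 1) m D (by rw [← add_assoc]; exact hmlt)
    obtain ⟨f, hfV, hfP⟩ := avoid (homogeneousSubmodule (Fin (n+1)) k m ⊓ I.restrictScalars k)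
      (associatedPrimes (MvPolynomial (Fin (n+1)) k) (MvPolynomial (Fin (n+1)) k ⧸ J))
      (associatedPrimes.finite _ _) (by
        intro P hP
        apply exists_mem_notMem_of_hilbF_lt
        refine ((hbd m).trans_lt hlt).trans_le ?_
        exact hilbF_prime_ge P (mem_assoc_iff.1 hP).1 (d + (t + 1)) (Dep.dim _ hJ hdep P hP) m)
    have hfh : f.IsHomogeneous m := (mem_homogeneousSubmodule m f).1 hfV.1
    have hfI : f ∈ I := hfV.2
    have hnz : NZ J f := nz_of_notMem hfP
    obtain ⟨g, hg, hreg⟩ := ih (J ⊔ Ideal.span {f}) (hJ.sup_span hfh)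
      (Dep.quot _ hdep hnz ⟨m, hm1, hfh⟩)
    have hg' : ∀ h ∈ f :: List.ofFn g, ∃ δ, 1 ≤ δ ∧ h.IsHomogeneous δ := by
      intro h hh
      rcases List.mem_cons.1 hh with rfl | hh
      · exact ⟨m, hm1, hfh⟩
      · obtain ⟨j, rfl⟩ := List.mem_ofFn.1 hh
        obtain ⟨m', h1, h2, -⟩ := (hg j).2
        exact ⟨m', h1, h2⟩
    refine ⟨Fin.snoc g f, ?_, ?_⟩
    · intro j
      refine Fin.lastCases ?_ (fun j => ?_) j
      · rw [Fin.snoc_last]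
        exact ⟨hfI, m, hm1, hfh, by simpa using hmle⟩
      · rw [Fin.snoc_castSucc]
        simpa using hg j
    · have hl : List.ofFn (Fin.snoc g f : Fin (t+1) → MvPolynomial (Fin (n+1)) k) =
          List.ofFn g ++ [f] := by
        rw [List.ofFn_succ']
        simp
      rw [hl]
      refine Reg.perm (l := f :: List.ofFn g) ?_ hJ hg' ⟨hnz, hreg⟩
      exact (List.perm_append_singleton f (List.ofFn g)).symm

theorem constCoeff_of_homog {J : Ideal (MvPolynomial (Fin (n+1)) k)} (hJ : IsHomogeneousIdeal J)
    (hne : J ≠ ⊤) {x : MvPolynomial (Fin (n+1)) k} (hx : x ∈ J) : constantCoeff x = 0 := by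
  by_contra hc
  apply hne
  have h := hJ x hx 0
  rw [homogeneousComponent_zero] at h
  refine Ideal.eq_top_of_isUnit_mem _ h ?_
  exact (IsUnit.mk0 _ hc).map C

theorem isRegular_of_reg {J : Ideal (MvPolynomial (Fin (n+1)) k)} (hJ : IsHomogeneousIdeal J)
    (hne : J ≠ ⊤) {t : ℕ} (f : Fin t → MvPolynomial (Fin (n+1)) k)
    (hf : ∀ j, ∃ m, 1 ≤ m ∧ (f j).IsHomogeneous m) (hreg : Reg J (List.ofFn f)) :
    RingTheory.Sequence.IsRegular (MvPolynomial (Fin (n+1)) k ⧸ J)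
        (List.ofFn fun j => Ideal.Quotient.mk J (f j)) := by
  have hmap : (List.ofFn fun j => Ideal.Quotient.mk J (f j)) =
      (List.ofFn f).map (Ideal.Quotient.mk J) := by
    rw [List.map_ofFn]; rfl
  rw [hmap]
  refine ⟨(isWeaklyRegular_quot_iff J _).2 hreg, ?_⟩
  intro htop
  let χ : (MvPolynomial (Fin (n+1)) k ⧸ J) →+* k :=
    Ideal.Quotient.lift J constantCoeff (fun x hx => constCoeff_of_homog hJ hne hx)
  have hle : (Ideal.ofList ((List.ofFn f).map (Ideal.Quotient.mk J)) • ⊤ :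
      Submodule (MvPolynomial (Fin (n+1)) k ⧸ J) (MvPolynomial (Fin (n+1)) k ⧸ J)) ≤
      RingHom.ker χ := by
    rw [smul_eq_mul, Ideal.mul_top, Ideal.ofList, Ideal.span_le]
    intro y hy
    obtain ⟨x, hx, rfl⟩ := List.mem_map.1 hy
    obtain ⟨j, rfl⟩ := List.mem_ofFn.1 hx
    obtain ⟨m, hm, hh⟩ := hf j
    change χ (Ideal.Quotient.mk J (f j)) = 0
    change constantCoeff (f j) = 0
    rw [constantCoeff_eq]
    exact hh.coeff_eq_zero (by simp; omega)
  rw [← htop] at hle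
  have h1 : (1 : MvPolynomial (Fin (n+1)) k ⧸ J) ∈ RingHom.ker χ := hle trivial
  rw [RingHom.mem_ker, map_one] at h1
  exact one_ne_zero h1

end PartE

/-- construction of a regular sequence in `k[x₀,…,xₙ]/J` with
homogeneous elements of `I` of controlled degrees, where `I` is unmixed radical
of projective dimension `d` and `J` is Cohen--Macaulay of projective dimension
`e ≥ d` (here `f j`, for `j : Fin (e − d)`, plays the role of `f_{j+1}`). -/
theorem exists_regular_sequence_in_unmixed_ideal {k : Type*} [Field k]
    [PerfectField k] [Infinite k] {n d e : ℕ}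
    (I J : Ideal (MvPolynomial (Fin (n+1)) k))
    (hIhom : IsHomogeneousIdeal I) (hIrad : I.IsRadical) (hIunm : IsUnmixed k I d)
    (hIne : hilbP k I ≠ 0) (hIdim : idealDim k I = d)
    (hJhom : IsHomogeneousIdeal J) (hJCM : IsCohenMacaulayOfDim k J e)
    (hde : d ≤ e) :
    ∃ f : Fin (e - d) → MvPolynomial (Fin (n+1)) k,
      (∀ j, f j ∈ I ∧ ∃ m : ℕ, (f j).IsHomogeneous m ∧
        (m : ℝ) ≤ (((d + (j : ℕ) + 1).factorial * idealDeg k I : ℕ) : ℝ) ^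
          ((1 : ℝ) / ((j : ℕ) + 1))) ∧
      RingTheory.Sequence.IsRegular (MvPolynomial (Fin (n+1)) k ⧸ J)
        (List.ofFn fun j => Ideal.Quotient.mk J (f j)) := by
  obtain ⟨hD, hbd⟩ := exists_bound I hIhom hIrad hIunm hIne hIdim
  obtain ⟨hJne, g, hg, hgreg, -⟩ := hJCM
  have hgl : ∀ f ∈ List.ofFn g, ∃ δ, 1 ≤ δ ∧ f.IsHomogeneous δ := by
    intro f hf
    obtain ⟨j, rfl⟩ := List.mem_ofFn.1 hf
    exact hg j
  have hmap : (List.ofFn fun j => Ideal.Quotient.mk J (g j)) =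
      (List.ofFn g).map (Ideal.Quotient.mk J) := by
    rw [List.map_ofFn]; rfl
  rw [hmap, isWeaklyRegular_quot_iff] at hgreg
  have hdep := Reg.dep hgl hgreg
  rw [List.length_ofFn, show e + 1 = d + (e - d) + 1 by omega] at hdep
  obtain ⟨f, hf, hreg⟩ := exists_seq I (idealDeg k I) hD hbd (e - d) J hJhom hdep
  refine ⟨f, fun j => ?_, isRegular_of_reg hJhom hJne f (fun j => ?_) hreg⟩
  · obtain ⟨h1, m, -, h2, h3⟩ := hf j
    exact ⟨h1, m, h2, h3⟩
  · obtain ⟨-, m, h1, h2, -⟩ := hf j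
    exact ⟨m, h1, h2⟩
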